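/- arXiv:2212.04626 — 11 statements merged into one kernel-verified Lean document; each statement's English description precedes it below -/
import Mathlib

section
/- For every g ∈ O(V) such that p_g is invertible: p_{g⁻¹} = p_gᵗ and q_{g⁻¹} = q_gᵗ, the map p_{g⁻¹} is invertible, and the operators T_g := q_g∘p_g⁻¹ and T̂_g := T_{g⁻¹} = q_{g⁻¹}∘p_{g⁻¹}⁻¹ satisfy T̂_g = −p_g⁻¹ ∘ T_g ∘ p_g. -/
/-!
Orthogonality gives `g⁻¹ = gᵗ`, and `J` is skew, so transposition commutes with taking the
`J`-linear part `p` and the `J`-antilinear part `q`; hence `p_{g⁻¹} = p_gᵗ` is invertible.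
The `J`-antilinear part of `g g⁻¹ = 1` is `p_g q_{g⁻¹} + q_g p_{g⁻¹} = 0`, and multiplying by
`p_g⁻¹` on the left and `p_{g⁻¹}⁻¹` on the right gives `T̂_g = -p_g⁻¹ q_g = -p_g⁻¹ T_g p_g`.
-/

open scoped RealInnerProductSpace

/-- For every `g ∈ O(V)` such that `p_g` is invertible:
`p_{g⁻¹} = p_gᵗ` and `q_{g⁻¹} = q_gᵗ`, the map `p_{g⁻¹}` is invertible, and the operators
`T_g := q_g∘p_g⁻¹` and `T̂_g := T_{g⁻¹} = q_{g⁻¹}∘p_{g⁻¹}⁻¹` satisfy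
`T̂_g = −p_g⁻¹ ∘ T_g ∘ p_g`. -/
theorem stmt_3 {V : Type*} [NormedAddCommGroup V] [InnerProductSpace ℝ V]
    [FiniteDimensional ℝ V] (m : ℕ) (hdim : Module.finrank ℝ V = 2 * m)
    (J : Module.End ℝ V) (hJ2 : J * J = -1)
    (hJd : ∀ u v : V, ⟪J u, J v⟫ = ⟪u, v⟫)
    (g : Module.End ℝ V) (hgo : LinearMap.adjoint g * g = 1)
    (p q p' q' : Module.End ℝ V)
    (hp : p = (2⁻¹ : ℝ) • (g - J * g * J))
    (hq : q = (2⁻¹ : ℝ) • (g + J * g * J))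
    (hpu : IsUnit p)
    (hp' : p' = (2⁻¹ : ℝ) • (Ring.inverse g - J * Ring.inverse g * J))
    (hq' : q' = (2⁻¹ : ℝ) • (Ring.inverse g + J * Ring.inverse g * J)) :
    p' = LinearMap.adjoint p ∧
    q' = LinearMap.adjoint q ∧
    IsUnit p' ∧
    q' * Ring.inverse p' = -(Ring.inverse p * (q * Ring.inverse p) * p) := by
  have hgo' : g * LinearMap.adjoint g = 1 := mul_eq_one_comm.mp hgo
  have hginv : Ring.inverse g = LinearMap.adjoint g :=
    Ring.inverse_unit (⟨g, LinearMap.adjoint g, hgo', hgo⟩ : (Module.End ℝ V)ˣ)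
  simp only [← LinearMap.star_eq_adjoint] at hginv hgo' ⊢
  -- `J` is orthogonal and squares to `-1`, hence it is skew.
  have hJs : star J = -J := by
    have h1 : star J * J = 1 := by
      rw [LinearMap.star_eq_adjoint]
      ext v
      refine ext_inner_right ℝ fun w => ?_
      simp [Module.End.mul_apply, LinearMap.adjoint_inner_left, hJd]
    calc star J = -(star J * (J * J)) := by rw [hJ2]; simp
      _ = -J := by rw [← mul_assoc, h1, one_mul]
  have hp's : p' = star p := by
    rw [hp', hp, hginv]
    simp [hJs, mul_assoc]
  have hq's : q' = star q := by
    rw [hq', hq, hginv]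
    simp [hJs, mul_assoc]
  have hp'u : IsUnit p' := hp's ▸ hpu.star
  -- The `J`-antilinear part of `g * g⁻¹ = 1` vanishes.
  have key : p * q' + q * p' = 0 := by
    have hJJ : J * g * J * (J * star g * J) = 1 := by
      calc J * g * J * (J * star g * J) = J * g * (J * J) * star g * J := by
            simp only [mul_assoc]
        _ = -(J * (g * star g) * J) := by rw [hJ2]; simp [mul_assoc]
        _ = 1 := by rw [hgo', mul_one, hJ2, neg_neg]
    rw [hp, hq, hp', hq', hginv]
    simp only [smul_mul_smul_comm, ← smul_add]
    have h2 : (g - J * g * J) * (star g + J * star g * J)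
        + (g + J * g * J) * (star g - J * star g * J)
        = (2 : ℝ) • (g * star g - J * g * J * (J * star g * J)) := by
      rw [two_smul]
      noncomm_ring
    rw [h2, hJJ, hgo', sub_self, smul_zero, smul_zero]
  refine ⟨hp's, hq's, hp'u, ?_⟩
  have hpi : Ring.inverse p * p = 1 := Ring.inverse_mul_cancel p hpu
  have hpi' : p' * Ring.inverse p' = 1 := Ring.mul_inverse_cancel p' hp'u
  calc q' * Ring.inverse p'
      = Ring.inverse p * (p * q') * Ring.inverse p' := by
        rw [← mul_assoc (Ring.inverse p), hpi, one_mul]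
    _ = -(Ring.inverse p * q * (p' * Ring.inverse p')) := by
        rw [eq_neg_of_add_eq_zero_left key]
        simp only [mul_neg, neg_mul, mul_assoc]
    _ = -(Ring.inverse p * (q * Ring.inverse p) * p) := by
        rw [hpi']
        simp only [mul_assoc, hpi]
end

section
/- For every g ∈ Sp(V), the operator T_g := q_g∘p_g⁻¹ satisfies: T_g∘J = −J∘T_g (antilinearity), T_gᵗ = T_g (symmetry), 1 − T_g² = (p_g∘p_gᵗ)⁻¹, and 0 < 1 − T_g² ≤ 1 (i.e., 1 − T_g² is positive definite and T_g² is positive semidefinite). -/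
/-!
Write `h = gᵗ`. Since `J` is orthogonal with `J² = -1`, `Jᵗ = -J`, and preservation of the symplectic
form reads `h J g = J`. Expanding `p` and `q` then gives the two Bogoliubov-type identities
`pᵗ p - qᵗ q = 1` and `pᵗ q = qᵗ p` (`adjoint_identities`). The first one makes `p` injective, hence
invertible in finite dimension; conjugating by `p⁻¹`, the second says that `T = q p⁻¹` is symmetric,
and the first that `1 - Tᵗ T = (p⁻¹)ᵗ p⁻¹ = (p pᵗ)⁻¹`. Both positivity claims follow, as
`⟪v, (1 - T²) v⟫ = ‖p⁻¹ v‖²` and `⟪v, T² v⟫ = ‖T v‖²`.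
-/

open scoped RealInnerProductSpace

/-- The ring-theoretic core: here `h` plays the role of `gᵗ`, so that `h - J h J` and `h + J h J` are,
up to the factor `1/2`, the transposes of `p` and `q`. -/
theorem adjoint_identities {A : Type*} [Ring A] [Algebra ℝ A] (J g h : A)
    (hJ2 : J * J = -1) (hJ : h * J * g = J) :
    ((2⁻¹ : ℝ) • (h - J * h * J)) * ((2⁻¹ : ℝ) • (g - J * g * J))
      - ((2⁻¹ : ℝ) • (h + J * h * J)) * ((2⁻¹ : ℝ) • (g + J * g * J)) = 1 ∧
    ((2⁻¹ : ℝ) • (h - J * h * J)) * ((2⁻¹ : ℝ) • (g + J * g * J))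
      = ((2⁻¹ : ℝ) • (h + J * h * J)) * ((2⁻¹ : ℝ) • (g - J * g * J)) := by
  have e1 : h * (J * g * J) = -1 := by rw [← mul_assoc, ← mul_assoc, hJ, hJ2]
  have e2 : J * h * J * g = -1 := by rw [mul_assoc J h J, mul_assoc, hJ, hJ2]
  simp only [smul_mul_smul_comm, mul_sub, sub_mul, mul_add, add_mul, e1, e2]
  constructor <;> module

/-- For every `g ∈ Sp(V)`, the operator `T_g := q_g∘p_g⁻¹` satisfies:
`T_g∘J = −J∘T_g` (antilinearity), `T_gᵗ = T_g` (symmetry),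
`1 − T_g² = (p_g∘p_gᵗ)⁻¹`, and `0 < 1 − T_g² ≤ 1` (i.e., `1 − T_g²` is positive definite
and `T_g²` is positive semidefinite). -/
theorem stmt_4 {V : Type*} [NormedAddCommGroup V] [InnerProductSpace ℝ V]
    [FiniteDimensional ℝ V] (m : ℕ) (hdim : Module.finrank ℝ V = 2 * m)
    (J : Module.End ℝ V) (hJ2 : J * J = -1)
    (hJd : ∀ u v : V, ⟪J u, J v⟫ = ⟪u, v⟫)
    (g : Module.End ℝ V) (hg : IsUnit g)
    (hgs : ∀ u v : V, ⟪J (g u), g v⟫ = ⟪J u, v⟫)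
    (p q T : Module.End ℝ V)
    (hp : p = (2⁻¹ : ℝ) • (g - J * g * J))
    (hq : q = (2⁻¹ : ℝ) • (g + J * g * J))
    (hT : T = q * Ring.inverse p) :
    T * J = -(J * T) ∧
    LinearMap.adjoint T = T ∧
    1 - T * T = Ring.inverse (p * LinearMap.adjoint p) ∧
    (∀ v : V, v ≠ 0 → 0 < ⟪v, (1 - T * T) v⟫) ∧
    (∀ v : V, 0 ≤ ⟪v, (T * T) v⟫) := by
  have hJadj : LinearMap.adjoint J = -J := by
    symm
    rw [LinearMap.eq_adjoint_iff]
    intro x y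
    have hx : J (J x) = -x := by simpa using LinearMap.congr_fun hJ2 x
    rw [← hJd, LinearMap.neg_apply, map_neg, hx, neg_neg]
  have hsymp : LinearMap.adjoint g * J * g = J := by
    refine LinearMap.ext fun x => ext_inner_right ℝ fun y => ?_
    simpa [LinearMap.adjoint_inner_left] using hgs x y
  have hpadj : LinearMap.adjoint p
      = (2⁻¹ : ℝ) • (LinearMap.adjoint g - J * LinearMap.adjoint g * J) := by
    simp only [← LinearMap.star_eq_adjoint] at hJadj ⊢
    simp [hp, hJadj, mul_assoc]
  have hqadj : LinearMap.adjoint q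
      = (2⁻¹ : ℝ) • (LinearMap.adjoint g + J * LinearMap.adjoint g * J) := by
    simp only [← LinearMap.star_eq_adjoint] at hJadj ⊢
    simp [hq, hJadj, mul_assoc]
  obtain ⟨hdiff, hcomm⟩ := adjoint_identities J g (LinearMap.adjoint g) hJ2 hsymp
  rw [← hpadj, ← hqadj, ← hp, ← hq] at hdiff hcomm
  have hpJ : p * J = J * p := by
    have h1 : J * g * J * J = -(J * g) := by rw [mul_assoc, hJ2, mul_neg_one]
    have h2 : J * (J * g * J) = -(g * J) := by rw [mul_assoc, ← mul_assoc, hJ2, neg_one_mul]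
    rw [hp, smul_mul_assoc, mul_smul_comm, sub_mul, mul_sub, h1, h2]
    module
  have hqJ : q * J = -(J * q) := by
    have h1 : J * g * J * J = -(J * g) := by rw [mul_assoc, hJ2, mul_neg_one]
    have h2 : J * (J * g * J) = -(g * J) := by rw [mul_assoc, ← mul_assoc, hJ2, neg_one_mul]
    rw [hq, smul_mul_assoc, mul_smul_comm, add_mul, mul_add, h1, h2]
    module
  -- `‖p x‖² = ‖x‖² + ‖q x‖²`, so `p` is injective.
  have hpu : IsUnit p := by
    rw [LinearMap.isUnit_iff_ker_eq_bot, LinearMap.ker_eq_bot']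
    intro x hx
    have h := congrArg (fun y => ⟪y, x⟫) (LinearMap.congr_fun hdiff x)
    simp only [LinearMap.sub_apply, Module.End.mul_apply, inner_sub_left,
      LinearMap.adjoint_inner_left, hx, inner_zero_right, Module.End.one_apply] at h
    have h1 : 0 ≤ ⟪q x, q x⟫ := real_inner_self_nonneg
    have h2 : 0 ≤ ⟪x, x⟫ := real_inner_self_nonneg
    exact (inner_self_eq_zero (𝕜 := ℝ)).mp (by linarith)
  obtain ⟨P, hP⟩ : ∃ P, P = Ring.inverse p := ⟨_, rfl⟩
  have hpP : p * P = 1 := by rw [hP, Ring.mul_inverse_cancel p hpu]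
  have hPp : P * p = 1 := by rw [hP, Ring.inverse_mul_cancel p hpu]
  rw [← hP] at hT
  have hadjPp : LinearMap.adjoint P * LinearMap.adjoint p = 1 := by
    simp only [← LinearMap.star_eq_adjoint, ← star_mul, hpP, star_one]
  have hadjpP : LinearMap.adjoint p * LinearMap.adjoint P = 1 := by
    simp only [← LinearMap.star_eq_adjoint, ← star_mul, hPp, star_one]
  have hadjT' : LinearMap.adjoint T = LinearMap.adjoint P * LinearMap.adjoint q := by
    simp only [← LinearMap.star_eq_adjoint, hT, star_mul]
  have hadjT : LinearMap.adjoint T = T := by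
    calc LinearMap.adjoint T
        = LinearMap.adjoint P * (LinearMap.adjoint q * p) * P := by
          rw [hadjT', mul_assoc, mul_assoc, hpP, mul_one]
      _ = T := by rw [← hcomm, ← mul_assoc, hadjPp, one_mul, hT]
  have hPJ : P * J = J * P := by
    calc P * J = P * (J * p) * P := by rw [mul_assoc, mul_assoc, hpP, mul_one]
      _ = J * P := by rw [← hpJ, ← mul_assoc, hPp, one_mul]
  have hTT : 1 - T * T = LinearMap.adjoint P * P := by
    have hqq : LinearMap.adjoint q * q = LinearMap.adjoint p * p - 1 := by
      rw [← hdiff, sub_sub_cancel]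
    calc 1 - T * T = 1 - LinearMap.adjoint P * (LinearMap.adjoint q * q) * P := by
          nth_rewrite 1 [← hadjT]
          rw [hadjT', hT]
          simp only [mul_assoc]
      _ = LinearMap.adjoint P * P := by
          rw [hqq, mul_sub, ← mul_assoc, hadjPp, one_mul, mul_one, sub_mul, hpP, sub_sub_cancel]
  refine ⟨?_, hadjT, ?_, fun v hv => ?_, fun v => ?_⟩
  · rw [hT, mul_assoc, hPJ, ← mul_assoc, hqJ, neg_mul, mul_assoc]
  · have hl : (LinearMap.adjoint P * P) * (p * LinearMap.adjoint p) = 1 := by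
      rw [mul_assoc, ← mul_assoc P, hPp, one_mul, hadjPp]
    have hr : (p * LinearMap.adjoint p) * (LinearMap.adjoint P * P) = 1 := by
      rw [mul_assoc, ← mul_assoc _ _ P, hadjpP, one_mul, hpP]
    rw [hTT]
    exact (Ring.inverse_unit ⟨_, _, hr, hl⟩).symm
  · rw [hTT, Module.End.mul_apply, LinearMap.adjoint_inner_right]
    refine real_inner_self_pos.mpr fun h0 => hv ?_
    simpa [h0] using (LinearMap.congr_fun hpP v).symm
  · rw [Module.End.mul_apply]
    nth_rewrite 1 [← hadjT]
    rw [LinearMap.adjoint_inner_right]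
    exact real_inner_self_nonneg
end

section
/- For every g ∈ O(V) such that p_g is invertible, the operator T_g := q_g∘p_g⁻¹ satisfies: T_g∘J = −J∘T_g (antilinearity), T_gᵗ = −T_g (skewsymmetry), 1 − T_g² = (p_g∘p_gᵗ)⁻¹, and 1 − T_g² ≥ 1 (i.e., −T_g² is positive semidefinite). -/
/-!
Decompose `g = p + q` into its `J`-linear part `p` and its `J`-antilinear part `q`. Since
`Jᵗ = -J`, the same recipe applied to `gᵗ` yields `pᵗ` and `qᵗ`, so the linear and antilinear
parts of `gᵗ g = 1` read `pᵗ p + qᵗ q = 1` and `pᵗ q + qᵗ p = 0`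
(`gram_linear_part`, `gram_antilinear_part`). Multiplying by `(p⁻¹)ᵗ` on the left and by `p⁻¹` on
the right, the second identity becomes `Tᵗ = -T` and the first becomes
`1 + Tᵗ T = (p⁻¹)ᵗ p⁻¹`, that is, `1 - T² = (p pᵗ)⁻¹`. Positivity is `-T² = Tᵗ T`, and `T`
is antilinear because `p⁻¹` commutes with `J` while `q` anticommutes with it.
-/

section Algebraic

variable {R : Type*} [Ring R] [Algebra ℝ R] {J g G : R}

lemma conj_mul_conj (hJ : J * J = -1) (hG : G * g = 1) :
    J * G * J * (J * g * J) = 1 := by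
  calc J * G * J * (J * g * J) = J * G * (J * J) * g * J := by noncomm_ring
    _ = -(J * (G * g) * J) := by rw [hJ]; noncomm_ring
    _ = 1 := by rw [hG, mul_one, hJ, neg_neg]

/-- With `G` in the role of `gᵗ`: the `J`-linear part of `G * g = 1`. -/
lemma gram_linear_part (hJ : J * J = -1) (hG : G * g = 1) :
    ((2⁻¹ : ℝ) • (G - J * G * J)) * ((2⁻¹ : ℝ) • (g - J * g * J)) +
      ((2⁻¹ : ℝ) • (G + J * G * J)) * ((2⁻¹ : ℝ) • (g + J * g * J)) = 1 := by
  have h := conj_mul_conj hJ hG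
  simp only [smul_mul_smul_comm, sub_mul, mul_sub, add_mul, mul_add, h, hG]
  module

/-- With `G` in the role of `gᵗ`: the `J`-antilinear part of `G * g = 1`. -/
lemma gram_antilinear_part (hJ : J * J = -1) (hG : G * g = 1) :
    ((2⁻¹ : ℝ) • (G - J * G * J)) * ((2⁻¹ : ℝ) • (g + J * g * J)) +
      ((2⁻¹ : ℝ) • (G + J * G * J)) * ((2⁻¹ : ℝ) • (g - J * g * J)) = 0 := by
  have h := conj_mul_conj hJ hG
  simp only [smul_mul_smul_comm, sub_mul, mul_sub, add_mul, mul_add, h, hG]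
  module

lemma linear_part_comm (hJ : J * J = -1) :
    ((2⁻¹ : ℝ) • (g - J * g * J)) * J = J * ((2⁻¹ : ℝ) • (g - J * g * J)) := by
  have h1 : J * g * J * J = -(J * g) := by rw [mul_assoc, hJ]; noncomm_ring
  have h2 : J * (J * g * J) = -(g * J) := by
    rw [← mul_assoc, ← mul_assoc, hJ]; noncomm_ring
  simp only [smul_mul_assoc, mul_smul_comm, sub_mul, mul_sub, h1, h2]
  module

lemma antilinear_part_anticomm (hJ : J * J = -1) :
    ((2⁻¹ : ℝ) • (g + J * g * J)) * J = -(J * ((2⁻¹ : ℝ) • (g + J * g * J))) := by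
  have h1 : J * g * J * J = -(J * g) := by rw [mul_assoc, hJ]; noncomm_ring
  have h2 : J * (J * g * J) = -(g * J) := by
    rw [← mul_assoc, ← mul_assoc, hJ]; noncomm_ring
  simp only [smul_mul_assoc, mul_smul_comm, add_mul, mul_add, h1, h2]
  module

end Algebraic

open scoped RealInnerProductSpace

/-- For every `g ∈ O(V)` such that `p_g` is invertible, the operator
`T_g := q_g∘p_g⁻¹` satisfies: `T_g∘J = −J∘T_g` (antilinearity), `T_gᵗ = −T_g`
(skewsymmetry), `1 − T_g² = (p_g∘p_gᵗ)⁻¹`, and `1 − T_g² ≥ 1` (i.e., `−T_g²` is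
positive semidefinite). -/
theorem stmt_5 {V : Type*} [NormedAddCommGroup V] [InnerProductSpace ℝ V]
    [FiniteDimensional ℝ V] (m : ℕ) (hdim : Module.finrank ℝ V = 2 * m)
    (J : Module.End ℝ V) (hJ2 : J * J = -1)
    (hJd : ∀ u v : V, ⟪J u, J v⟫ = ⟪u, v⟫)
    (g : Module.End ℝ V) (hgo : LinearMap.adjoint g * g = 1)
    (p q T : Module.End ℝ V)
    (hp : p = (2⁻¹ : ℝ) • (g - J * g * J))
    (hq : q = (2⁻¹ : ℝ) • (g + J * g * J))
    (hpu : IsUnit p)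
    (hT : T = q * Ring.inverse p) :
    T * J = -(J * T) ∧
    LinearMap.adjoint T = -T ∧
    1 - T * T = Ring.inverse (p * LinearMap.adjoint p) ∧
    (∀ v : V, 0 ≤ ⟪v, (-(T * T)) v⟫) := by
  have hJs : star J = -J := by
    have h : star J * J = 1 := by
      ext v
      refine ext_inner_right ℝ fun w => ?_
      simp [LinearMap.star_eq_adjoint, LinearMap.adjoint_inner_left, hJd]
    calc star J = -(star J * (J * J)) := by rw [hJ2]; noncomm_ring
      _ = -(star J * J * J) := by rw [mul_assoc]
      _ = -J := by rw [h, one_mul]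
  simp only [← LinearMap.star_eq_adjoint] at hgo ⊢
  have hps : star p = (2⁻¹ : ℝ) • (star g - J * star g * J) := by
    rw [hp]; simp [hJs, mul_assoc]
  have hqs : star q = (2⁻¹ : ℝ) • (star g + J * star g * J) := by
    rw [hq]; simp [hJs, mul_assoc]
  have hlin : star p * p + star q * q = 1 := by
    rw [hps, hqs, hp, hq]; exact gram_linear_part hJ2 hgo
  have hanti : star p * q + star q * p = 0 := by
    rw [hps, hqs, hp, hq]; exact gram_antilinear_part hJ2 hgo
  have hpJ : p * J = J * p := by rw [hp]; exact linear_part_comm hJ2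
  have hqJ : q * J = -(J * q) := by rw [hq]; exact antilinear_part_anticomm hJ2
  have hpr : p * Ring.inverse p = 1 := Ring.mul_inverse_cancel p hpu
  have hrp : Ring.inverse p * p = 1 := Ring.inverse_mul_cancel p hpu
  generalize Ring.inverse p = r at hT hpr hrp
  have hsrp : star r * star p = 1 := by rw [← star_mul, hpr, star_one]
  have hspr : star p * star r = 1 := by rw [← star_mul, hrp, star_one]
  have hrJ : r * J = J * r := by
    calc r * J = r * (J * p) * r := by rw [mul_assoc, mul_assoc, hpr, mul_one]
      _ = J * r := by rw [← hpJ, ← mul_assoc, hrp, one_mul]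
  have hTs : star T = -T := by
    have h : star r * (star p * q + star q * p) * r = q * r + star r * star q := by
      calc _ = star r * star p * (q * r) + star r * star q * (p * r) := by noncomm_ring
        _ = _ := by rw [hsrp, hpr, one_mul, mul_one]
    rw [hanti, mul_zero, zero_mul] at h
    rw [hT, star_mul]
    exact eq_neg_of_add_eq_zero_right h.symm
  refine ⟨?_, hTs, ?_, fun v => ?_⟩
  · rw [hT, mul_assoc, hrJ, ← mul_assoc, hqJ, neg_mul, mul_assoc]
  · have hinv : Ring.inverse (p * star p) = star r * r := by
      have h₁ : p * star p * (star r * r) = 1 := by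
        calc p * star p * (star r * r) = p * (star p * star r) * r := by noncomm_ring
          _ = 1 := by rw [hspr, mul_one, hpr]
      have h₂ : star r * r * (p * star p) = 1 := by
        calc star r * r * (p * star p) = star r * (r * p) * star p := by noncomm_ring
          _ = 1 := by rw [hrp, mul_one, hsrp]
      exact Ring.inverse_unit ⟨p * star p, star r * r, h₁, h₂⟩
    have h : star r * (star p * p + star q * q) * r = 1 + star T * T := by
      calc _ = star r * star p * (p * r) + star r * star q * (q * r) := by noncomm_ring
        _ = _ := by rw [hsrp, hpr, hT, star_mul, one_mul]
    rw [hlin, mul_one, hTs] at h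
    rw [hinv, h, neg_mul, sub_eq_add_neg]
  · rw [← neg_mul, ← hTs, LinearMap.star_eq_adjoint, Module.End.mul_apply,
      LinearMap.adjoint_inner_right]
    exact real_inner_self_nonneg
end

section
/- For all g, h ∈ Sp(V): p_{gh} = p_g ∘ (1 − T̂_g∘T_h) ∘ p_h; in particular 1 − T̂_g∘T_h is invertible, and T_{gh} = T_g + (p_gᵗ)⁻¹ ∘ T_h ∘ (1 − T̂_g∘T_h)⁻¹ ∘ p_g⁻¹. -/
open scoped RealInnerProductSpace

/-!
Since `Jᵗ = -J`, a symplectic `g` satisfies `gᵗ J g = J = g J gᵗ`, so `g⁻¹ = -J gᵗ J`. Splitting into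
`J`-linear and `J`-antilinear parts gives `p_{g⁻¹} = p_gᵗ` and `q_{g⁻¹} = -q_gᵗ`, and the two parts of
`g g⁻¹ = 1 = g⁻¹ g` give `p_g p_gᵗ - q_g q_gᵗ = 1`, `p_g q_gᵗ = q_g p_gᵗ` and
`p_gᵗ p_g = 1 + q_gᵗ q_g`. The last identity makes `p_g` injective, hence invertible
(`isUnit_linearPart`), and the second says `p_g T̂_g = -q_g`. The formulas for `p_{gh}` and `T_{gh}` follow
from `p_{gh} = p_g p_h + q_g q_h` and `q_{gh} = p_g q_h + q_g p_h`; this last part is valid in any ring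
and is isolated in `composition_formula`.
-/

/-- The `J`-linear part `½(g - J g J)` of an endomorphism. -/
noncomputable def linearPart {A : Type*} [Ring A] [Algebra ℝ A] (J g : A) : A :=
  (2⁻¹ : ℝ) • (g - J * g * J)

/-- The `J`-antilinear part `½(g + J g J)` of an endomorphism. -/
noncomputable def antilinearPart {A : Type*} [Ring A] [Algebra ℝ A] (J g : A) : A :=
  (2⁻¹ : ℝ) • (g + J * g * J)

section Algebra

variable {A : Type*} [Ring A] [Algebra ℝ A] {J : A}

theorem linearPart_mul (hJ : J * J = -1) (g h : A) :
    linearPart J (g * h) =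
      linearPart J g * linearPart J h + antilinearPart J g * antilinearPart J h := by
  have key : (g - J * g * J) * (h - J * h * J) + (g + J * g * J) * (h + J * h * J) =
      (2 : ℝ) • (g * h - J * (g * h) * J) := by
    rw [two_smul]
    have e : J * g * J * (J * h * J) = - (J * (g * h) * J) := by
      rw [show J * g * J * (J * h * J) = J * g * (J * J) * h * J by noncomm_ring, hJ]
      noncomm_ring
    simp only [mul_add, add_mul, mul_sub, sub_mul, e]
    abel
  simp only [linearPart, antilinearPart, smul_mul_smul_comm, ← smul_add, key, smul_smul]
  norm_num

theorem antilinearPart_mul (hJ : J * J = -1) (g h : A) :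
    antilinearPart J (g * h) =
      linearPart J g * antilinearPart J h + antilinearPart J g * linearPart J h := by
  have key : (g - J * g * J) * (h + J * h * J) + (g + J * g * J) * (h - J * h * J) =
      (2 : ℝ) • (g * h + J * (g * h) * J) := by
    rw [two_smul]
    have e : J * g * J * (J * h * J) = - (J * (g * h) * J) := by
      rw [show J * g * J * (J * h * J) = J * g * (J * J) * h * J by noncomm_ring, hJ]
      noncomm_ring
    simp only [mul_add, add_mul, mul_sub, sub_mul, e]
    abel
  simp only [linearPart, antilinearPart, smul_mul_smul_comm, ← smul_add, key, smul_smul]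
  norm_num

theorem linearPart_one (hJ : J * J = -1) : linearPart J (1 : A) = 1 := by
  have : (1 : A) - J * 1 * J = (2 : ℝ) • 1 := by
    rw [mul_one, hJ, two_smul]; abel
  rw [linearPart, this, smul_smul]; norm_num

theorem antilinearPart_one (hJ : J * J = -1) : antilinearPart J (1 : A) = 0 := by
  simp [antilinearPart, hJ]

/-- `-J x J` has the same `J`-linear part as `x`, and the opposite antilinear part
(`antilinearPart_neg_conj`); with `x = gᵗ` this describes `p_{g⁻¹}` and `q_{g⁻¹}`. -/
theorem linearPart_neg_conj (hJ : J * J = -1) (x : A) :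
    linearPart J (-(J * x * J)) = linearPart J x := by
  have : J * -(J * x * J) * J = -x := by
    rw [show J * -(J * x * J) * J = -((J * J) * x * (J * J)) by noncomm_ring, hJ]; noncomm_ring
  rw [linearPart, linearPart, this]
  congr 1; abel

theorem antilinearPart_neg_conj (hJ : J * J = -1) (x : A) :
    antilinearPart J (-(J * x * J)) = -antilinearPart J x := by
  have : J * -(J * x * J) * J = -x := by
    rw [show J * -(J * x * J) * J = -((J * J) * x * (J * J)) by noncomm_ring, hJ]; noncomm_ring
  rw [antilinearPart, antilinearPart, this, ← smul_neg]
  congr 1; abel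

end Algebra

/-- The ring-theoretic core: `p, q` are the parts of `g`, `pt, qt` their transposes, and `r, s` the
parts of `h`, so that `p * r + q * s` and `p * s + q * r` are the parts of `g * h`. -/
theorem composition_formula {A : Type*} [Ring A] {p q pt qt r s : A}
    (hp : IsUnit p) (hpt : IsUnit pt) (hr : IsUnit r) (hpr : IsUnit (p * r + q * s))
    (h1 : p * pt - q * qt = 1) (h2 : p * qt = q * pt) :
    p * r + q * s = p * (1 - -qt * Ring.inverse pt * (s * Ring.inverse r)) * r ∧
    IsUnit (1 - -qt * Ring.inverse pt * (s * Ring.inverse r)) ∧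
    (p * s + q * r) * Ring.inverse (p * r + q * s) =
      q * Ring.inverse p + Ring.inverse pt * (s * Ring.inverse r) *
        Ring.inverse (1 - -qt * Ring.inverse pt * (s * Ring.inverse r)) * Ring.inverse p := by
  obtain ⟨p, rfl⟩ := hp
  obtain ⟨pt, rfl⟩ := hpt
  obtain ⟨r, rfl⟩ := hr
  simp only [Ring.inverse_unit] at *
  set a : A := 1 - -qt * ↑pt⁻¹ * (s * ↑r⁻¹) with ha
  have hT : (p : A) * (-qt * ↑pt⁻¹) = -q := by
    rw [← mul_assoc, mul_neg, h2, neg_mul, Units.mul_inv_cancel_right]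
  have hfac : (p : A) * r + q * s = p * a * r := by
    rw [ha, mul_sub, ← mul_assoc (p : A), hT]
    simp [add_mul, mul_assoc]
  have hua : IsUnit a := by
    rw [hfac] at hpr
    simpa using hpr
  refine ⟨hfac, hua, ?_⟩
  rw [hfac]
  obtain ⟨b, hb⟩ := hua
  rw [← hb, ← Units.val_mul, ← Units.val_mul, Ring.inverse_unit, Ring.inverse_unit]
  -- `p + q T̂ = (pᵗ)⁻¹` is the unit identity `p pᵗ - q qᵗ = 1` divided by `pᵗ`.
  have hS : (p : A) + q * (-qt * ↑pt⁻¹) = ↑pt⁻¹ := by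
    have := congrArg (· * (↑pt⁻¹ : A)) h1
    simp only [sub_mul, Units.mul_inv_cancel_right, one_mul] at this
    refine Eq.trans ?_ this
    noncomm_ring
  have hsum : (p : A) * (s * ↑r⁻¹) + q = q * b + ↑pt⁻¹ * (s * ↑r⁻¹) := by
    have := congrArg (· * (s * (↑r⁻¹ : A))) hS
    refine Eq.trans ?_ (congrArg (q * b + ·) this)
    rw [hb, ha]
    noncomm_ring
  have hnum : (p : A) * s + q * r = (q * b + ↑pt⁻¹ * (s * ↑r⁻¹)) * r := by
    rw [← hsum, add_mul]
    simp [mul_assoc]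
  rw [hnum]
  simp [mul_assoc, add_mul]

section Symplectic

variable {V : Type*} [NormedAddCommGroup V] [InnerProductSpace ℝ V] [FiniteDimensional ℝ V]
  {J : Module.End ℝ V}

theorem adjoint_J (hJ2 : J * J = -1) (hJd : ∀ u v : V, ⟪J u, J v⟫ = ⟪u, v⟫) :
    star J = -J := by
  have h : star J * J = 1 := by
    ext u
    refine ext_inner_right ℝ fun v => ?_
    rw [LinearMap.star_eq_adjoint, Module.End.mul_apply, LinearMap.adjoint_inner_left, hJd]; rfl
  have := congrArg (· * J) h
  simp only [mul_assoc, hJ2, one_mul, mul_neg, mul_one] at this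
  exact neg_eq_iff_eq_neg.1 this

theorem star_mul_J_mul {g : Module.End ℝ V} (hgs : ∀ u v : V, ⟪J (g u), g v⟫ = ⟪J u, v⟫) :
    star g * J * g = J := by
  ext u
  refine ext_inner_right ℝ fun v => ?_
  rw [LinearMap.star_eq_adjoint, Module.End.mul_apply, Module.End.mul_apply,
    LinearMap.adjoint_inner_left, hgs]

theorem star_linearPart (hJ : star J = -J) (g : Module.End ℝ V) :
    star (linearPart J g) = linearPart J (star g) := by
  simp only [linearPart, LinearMap.star_eq_adjoint] at *
  rw [map_smulₛₗ, map_sub, ← LinearMap.star_eq_adjoint (J * g * J), star_mul, star_mul,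
    LinearMap.star_eq_adjoint, LinearMap.star_eq_adjoint, hJ]
  simp [mul_assoc]

theorem star_antilinearPart (hJ : star J = -J) (g : Module.End ℝ V) :
    star (antilinearPart J g) = antilinearPart J (star g) := by
  simp only [antilinearPart, LinearMap.star_eq_adjoint] at *
  rw [map_smulₛₗ, map_add, ← LinearMap.star_eq_adjoint (J * g * J), star_mul, star_mul,
    LinearMap.star_eq_adjoint, LinearMap.star_eq_adjoint, hJ]
  simp [mul_assoc]

/-- The left inverse `-J gᵗ J` of a symplectic `g`; see `star_mul_J_mul`. -/
theorem neg_conj_star_mul (hJ2 : J * J = -1) {g : Module.End ℝ V} (h : star g * J * g = J) :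
    -(J * star g * J) * g = 1 := by
  rw [show -(J * star g * J) * g = -(J * (star g * J * g)) by noncomm_ring, h, hJ2, neg_neg]

/-- `p_gᵗ p_g = 1 + q_gᵗ q_g` is positive definite, so `p_g` is injective. -/
theorem isUnit_linearPart (hJ2 : J * J = -1) (hJ : star J = -J) {g : Module.End ℝ V}
    (h : star g * J * g = J) : IsUnit (linearPart J g) := by
  have e := linearPart_mul hJ2 (-(J * star g * J)) g
  rw [neg_conj_star_mul hJ2 h, linearPart_one hJ2, linearPart_neg_conj hJ2,
    antilinearPart_neg_conj hJ2, ← star_linearPart hJ, ← star_antilinearPart hJ] at e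
  rw [LinearMap.isUnit_iff_ker_eq_bot, LinearMap.ker_eq_bot']
  intro v hv
  have e' := congrArg (fun f : Module.End ℝ V => ⟪f v, v⟫) e
  simp only [Module.End.one_apply, LinearMap.add_apply, Module.End.mul_apply, hv, map_zero,
    zero_add, LinearMap.neg_apply, neg_mul, inner_neg_left, LinearMap.star_eq_adjoint,
    LinearMap.adjoint_inner_left] at e'
  have h1 := real_inner_self_nonneg (x := antilinearPart J g v)
  exact inner_self_eq_zero.1 (le_antisymm (e'.trans_le (neg_nonpos.2 h1)) real_inner_self_nonneg)

end Symplectic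

/-- For all `g, h ∈ Sp(V)`:
`p_{gh} = p_g ∘ (1 − T̂_g∘T_h) ∘ p_h`; in particular `1 − T̂_g∘T_h` is invertible, and
`T_{gh} = T_g + (p_gᵗ)⁻¹ ∘ T_h ∘ (1 − T̂_g∘T_h)⁻¹ ∘ p_g⁻¹`. -/
theorem stmt_6 {V : Type*} [NormedAddCommGroup V] [InnerProductSpace ℝ V]
    [FiniteDimensional ℝ V] (m : ℕ) (hdim : Module.finrank ℝ V = 2 * m)
    (J : Module.End ℝ V) (hJ2 : J * J = -1)
    (hJd : ∀ u v : V, ⟪J u, J v⟫ = ⟪u, v⟫)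
    (g h : Module.End ℝ V) (hg : IsUnit g) (hh : IsUnit h)
    (hgs : ∀ u v : V, ⟪J (g u), g v⟫ = ⟪J u, v⟫)
    (hhs : ∀ u v : V, ⟪J (h u), h v⟫ = ⟪J u, v⟫)
    (pg qg ph qh pgh qgh pg' qg' Tg Th Tgh Tghat : Module.End ℝ V)
    (hpg : pg = (2⁻¹ : ℝ) • (g - J * g * J))
    (hqg : qg = (2⁻¹ : ℝ) • (g + J * g * J))
    (hph : ph = (2⁻¹ : ℝ) • (h - J * h * J))
    (hqh : qh = (2⁻¹ : ℝ) • (h + J * h * J))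
    (hpgh : pgh = (2⁻¹ : ℝ) • (g * h - J * (g * h) * J))
    (hqgh : qgh = (2⁻¹ : ℝ) • (g * h + J * (g * h) * J))
    (hpg' : pg' = (2⁻¹ : ℝ) • (Ring.inverse g - J * Ring.inverse g * J))
    (hqg' : qg' = (2⁻¹ : ℝ) • (Ring.inverse g + J * Ring.inverse g * J))
    (hTg : Tg = qg * Ring.inverse pg)
    (hTh : Th = qh * Ring.inverse ph)
    (hTgh : Tgh = qgh * Ring.inverse pgh)
    (hThat : Tghat = qg' * Ring.inverse pg') :
    pgh = pg * (1 - Tghat * Th) * ph ∧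
    IsUnit (1 - Tghat * Th) ∧
    Tgh = Tg + Ring.inverse (LinearMap.adjoint pg) * Th *
      Ring.inverse (1 - Tghat * Th) * Ring.inverse pg := by
  have hJ := adjoint_J hJ2 hJd
  have hg1 := star_mul_J_mul hgs
  have hh1 := star_mul_J_mul hhs
  have hgh1 : star (g * h) * J * (g * h) = J :=
    star_mul_J_mul fun u v => (hgs (h u) (h v)).trans (hhs u v)
  have hleft := neg_conj_star_mul hJ2 hg1
  have hinv : Ring.inverse g = -(J * star g * J) := by
    obtain ⟨u, rfl⟩ := hg
    rw [Ring.inverse_unit]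
    exact (Units.eq_inv_of_mul_eq_one_right hleft).symm
  have hright : g * -(J * star g * J) = 1 := hinv ▸ Ring.mul_inverse_cancel g hg
  have hpu := isUnit_linearPart hJ2 hJ hg1
  have e1 := linearPart_mul hJ2 g (-(J * star g * J))
  have e2 := antilinearPart_mul hJ2 g (-(J * star g * J))
  rw [hright, linearPart_one hJ2, linearPart_neg_conj hJ2, antilinearPart_neg_conj hJ2,
    ← star_linearPart hJ, ← star_antilinearPart hJ] at e1
  rw [hright, antilinearPart_one hJ2, linearPart_neg_conj hJ2, antilinearPart_neg_conj hJ2,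
    ← star_linearPart hJ, ← star_antilinearPart hJ] at e2
  have hp' : pg' = star (linearPart J g) := by
    rw [hpg', hinv, star_linearPart hJ, ← linearPart_neg_conj hJ2]; rfl
  have hq' : qg' = -star (antilinearPart J g) := by
    rw [hqg', hinv, star_antilinearPart hJ, ← antilinearPart_neg_conj hJ2]; rfl
  have hpgh2 := hpgh.trans (linearPart_mul hJ2 g h)
  have hqgh2 := hqgh.trans (antilinearPart_mul hJ2 g h)
  have hu : IsUnit pgh := hpgh ▸ isUnit_linearPart hJ2 hJ hgh1
  change pg = linearPart J g at hpg
  change qg = antilinearPart J g at hqg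
  change ph = linearPart J h at hph
  change qh = antilinearPart J h at hqh
  rw [hpgh2] at hu
  rw [hTgh, hTg, hThat, hTh, hp', hq', hpgh2, hqgh2, hpg, hqg, hph, hqh,
    ← LinearMap.star_eq_adjoint]
  refine composition_formula hpu hpu.star (isUnit_linearPart hJ2 hJ hh1) hu ?_ ?_
  · rw [e1, mul_neg, sub_eq_add_neg]
  · rw [mul_neg, neg_add_eq_sub] at e2
    exact (sub_eq_zero.1 e2.symm).symm
end

section
/- For all g, h ∈ O(V) such that p_g, p_h and p_{gh} are invertible: p_{gh} = p_g ∘ (1 − T̂_g∘T_h) ∘ p_h; in particular 1 − T̂_g∘T_h is invertible, and T_{gh} = T_g + (p_gᵗ)⁻¹ ∘ T_h ∘ (1 − T̂_g∘T_h)⁻¹ ∘ p_g⁻¹. -/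
/-!
Write `g = p_g + q_g` for the splitting of an endomorphism into its `J`-linear and `J`-antilinear
parts. Sorting `g h = (p_g + q_g)(p_h + q_h)` by type gives
`p_{gh} = p_g p_h + q_g q_h` and `q_{gh} = p_g q_h + q_g p_h` (`linPart_mul`, `antiPart_mul`).

For orthogonal `g` and `k = g⁻¹ = gᵗ`, orthogonality of `J` gives `p_k = p_gᵗ`, which is therefore
invertible. The relations coming from `g k = 1 = k g` then yield
`T̂_g = -p_g⁻¹ q_g`, `q_g p_g⁻¹ = -p_k⁻¹ q_k` and `p_g - q_g p_g⁻¹ q_g = p_k⁻¹`. The first turns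
`p_{gh}` into `p_g (1 - T̂_g T_h) p_h`; the other two give `q_{gh} = T_g p_{gh} + p_k⁻¹ q_h`, and
dividing by `p_{gh}` on the right gives the formula for `T_{gh}` (`ring_formula`).
-/

open scoped RealInnerProductSpace

lemma sandwich_mul {A : Type*} [Ring A] {J : A} (hJ : J * J = -1) (g h : A) :
    (J * g * J) * (J * h * J) = -(J * (g * h) * J) := by
  calc (J * g * J) * (J * h * J) = J * g * (J * J) * h * J := by noncomm_ring
    _ = -(J * (g * h) * J) := by rw [hJ]; noncomm_ring

section Parts

variable {A : Type*} [Ring A] [Algebra ℝ A]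

/-- The part of `g` commuting with `J`, when `J * J = -1`. -/
noncomputable def linPart (J g : A) : A := (2⁻¹ : ℝ) • (g - J * g * J)

/-- The part of `g` anticommuting with `J`, when `J * J = -1`. -/
noncomputable def antiPart (J g : A) : A := (2⁻¹ : ℝ) • (g + J * g * J)

lemma linPart_mul {J : A} (hJ : J * J = -1) (g h : A) :
    linPart J (g * h) = linPart J g * linPart J h + antiPart J g * antiPart J h := by
  have e := sandwich_mul hJ g h
  simp only [linPart, antiPart, smul_mul_smul_comm, mul_add, add_mul, mul_sub, sub_mul, e]
  module

lemma antiPart_mul {J : A} (hJ : J * J = -1) (g h : A) :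
    antiPart J (g * h) = linPart J g * antiPart J h + antiPart J g * linPart J h := by
  have e := sandwich_mul hJ g h
  simp only [linPart, antiPart, smul_mul_smul_comm, mul_add, add_mul, mul_sub, sub_mul, e]
  module

lemma linPart_one {J : A} (hJ : J * J = -1) : linPart J 1 = 1 := by
  simp only [linPart, mul_one, hJ]
  module

lemma antiPart_one {J : A} (hJ : J * J = -1) : antiPart J 1 = 0 := by
  simp [antiPart, hJ]

end Parts

/-- The algebraic core, in an arbitrary ring: `p, q` are the parts of `g`, `s, t` those of `g⁻¹`,
and `a, b` those of `h`. -/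
lemma ring_formula {A : Type*} [Ring A] (p s a : Aˣ) (q t b : A) (c : Aˣ)
    (h1 : (p : A) * t + q * s = 0) (h2 : (s : A) * p + t * q = 1) (h3 : (s : A) * q + t * p = 0)
    (hc : (c : A) = p * a + q * b) :
    (c : A) = p * (1 - t * ↑s⁻¹ * (b * ↑a⁻¹)) * a ∧
    IsUnit (1 - t * ↑s⁻¹ * (b * ↑a⁻¹)) ∧
    (p * b + q * a) * ↑c⁻¹ = q * ↑p⁻¹ + ↑s⁻¹ * (b * ↑a⁻¹) *
      Ring.inverse (1 - t * ↑s⁻¹ * (b * ↑a⁻¹)) * ↑p⁻¹ := by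
  have hts : (p : A) * (t * ↑s⁻¹) = -q := by
    rw [← mul_assoc, eq_neg_of_add_eq_zero_left h1]
    simp
  have hqp : q * ↑p⁻¹ = -(↑s⁻¹ * t) := by
    rw [Units.mul_inv_eq_iff_eq_mul, ← Units.mul_right_inj s, eq_neg_of_add_eq_zero_left h3]
    simp [mul_assoc]
  have hp : (p : A) = q * ↑p⁻¹ * q + ↑s⁻¹ := by
    rw [hqp, ← Units.mul_right_inj s]
    simp only [mul_add, neg_mul, mul_neg, mul_assoc, Units.mul_inv, Units.mul_inv_cancel_left]
    rw [← h2]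
    abel
  have hfac : (c : A) = p * (1 - t * ↑s⁻¹ * (b * ↑a⁻¹)) * a := by
    have : (p : A) * (1 - t * ↑s⁻¹ * (b * ↑a⁻¹)) * a
        = p * a - (p * (t * ↑s⁻¹)) * b * (↑a⁻¹ * a) := by noncomm_ring
    rw [this, hts, hc]
    simp
  have hx : (1 - t * ↑s⁻¹ * (b * ↑a⁻¹)) = ((p⁻¹ * c * a⁻¹ : Aˣ) : A) := by
    simp [hfac, mul_assoc]
  refine ⟨hfac, hx ▸ Units.isUnit _, ?_⟩
  rw [hx, Ring.inverse_unit, Units.mul_inv_eq_iff_eq_mul]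
  have hq : (p : A) * b + q * a = q * ↑p⁻¹ * c + ↑s⁻¹ * b := by
    rw [hc]
    nth_rw 1 [hp]
    simp only [mul_add, add_mul, mul_assoc, Units.inv_mul_cancel_left]
    abel
  rw [hq]
  simp [add_mul, mul_assoc]

/-- For all `g, h ∈ O(V)` such that `p_g`, `p_h` and `p_{gh}` are
invertible: `p_{gh} = p_g ∘ (1 − T̂_g∘T_h) ∘ p_h`; in particular `1 − T̂_g∘T_h` is
invertible, and `T_{gh} = T_g + (p_gᵗ)⁻¹ ∘ T_h ∘ (1 − T̂_g∘T_h)⁻¹ ∘ p_g⁻¹`. -/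
theorem stmt_7 {V : Type*} [NormedAddCommGroup V] [InnerProductSpace ℝ V]
    [FiniteDimensional ℝ V] (m : ℕ) (hdim : Module.finrank ℝ V = 2 * m)
    (J : Module.End ℝ V) (hJ2 : J * J = -1)
    (hJd : ∀ u v : V, ⟪J u, J v⟫ = ⟪u, v⟫)
    (g h : Module.End ℝ V)
    (hgo : LinearMap.adjoint g * g = 1)
    (hho : LinearMap.adjoint h * h = 1)
    (pg qg ph qh pgh qgh pg' qg' Tg Th Tgh Tghat : Module.End ℝ V)
    (hpg : pg = (2⁻¹ : ℝ) • (g - J * g * J))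
    (hqg : qg = (2⁻¹ : ℝ) • (g + J * g * J))
    (hph : ph = (2⁻¹ : ℝ) • (h - J * h * J))
    (hqh : qh = (2⁻¹ : ℝ) • (h + J * h * J))
    (hpgh : pgh = (2⁻¹ : ℝ) • (g * h - J * (g * h) * J))
    (hqgh : qgh = (2⁻¹ : ℝ) • (g * h + J * (g * h) * J))
    (hpgu : IsUnit pg) (hphu : IsUnit ph) (hpghu : IsUnit pgh)
    (hpg' : pg' = (2⁻¹ : ℝ) • (Ring.inverse g - J * Ring.inverse g * J))
    (hqg' : qg' = (2⁻¹ : ℝ) • (Ring.inverse g + J * Ring.inverse g * J))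
    (hTg : Tg = qg * Ring.inverse pg)
    (hTh : Th = qh * Ring.inverse ph)
    (hTgh : Tgh = qgh * Ring.inverse pgh)
    (hThat : Tghat = qg' * Ring.inverse pg') :
    pgh = pg * (1 - Tghat * Th) * ph ∧
    IsUnit (1 - Tghat * Th) ∧
    Tgh = Tg + Ring.inverse (LinearMap.adjoint pg) * Th *
      Ring.inverse (1 - Tghat * Th) * Ring.inverse pg := by
  have hgo' : g * LinearMap.adjoint g = 1 := mul_eq_one_comm.mp hgo
  have hinv : Ring.inverse g = LinearMap.adjoint g :=
    Ring.inverse_unit (⟨g, LinearMap.adjoint g, hgo', hgo⟩ : (Module.End ℝ V)ˣ)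
  have hJJ : LinearMap.adjoint J * J = 1 := by
    ext u
    refine ext_inner_right ℝ fun v => ?_
    simp [LinearMap.adjoint_inner_left, hJd]
  have hJadj : LinearMap.adjoint J = -J := by
    have hr : J * -J = 1 := by rw [mul_neg, hJ2, neg_neg]
    exact left_inv_eq_right_inv hJJ hr
  have hs : LinearMap.adjoint pg = pg' := by
    rw [hpg', hpg, hinv]
    simp only [← LinearMap.star_eq_adjoint] at hJadj ⊢
    simp [star_sub, star_mul, star_smul, hJadj, mul_assoc]
  have hsu : IsUnit pg' := by
    rw [← hs, ← LinearMap.star_eq_adjoint]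
    exact hpgu.star
  rw [hinv] at hpg' hqg'
  change pg = linPart J g at hpg
  change qg = antiPart J g at hqg
  change ph = linPart J h at hph
  change qh = antiPart J h at hqh
  change pgh = linPart J (g * h) at hpgh
  change qgh = antiPart J (g * h) at hqgh
  change pg' = linPart J (LinearMap.adjoint g) at hpg'
  change qg' = antiPart J (LinearMap.adjoint g) at hqg'
  have h1 : pg * qg' + qg * pg' = 0 := by
    rw [hpg, hqg, hpg', hqg', ← antiPart_mul hJ2, hgo', antiPart_one hJ2]
  have h2 : pg' * pg + qg' * qg = 1 := by
    rw [hpg, hqg, hpg', hqg', ← linPart_mul hJ2, hgo, linPart_one hJ2]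
  have h3 : pg' * qg + qg' * pg = 0 := by
    rw [hpg, hqg, hpg', hqg', ← antiPart_mul hJ2, hgo, antiPart_one hJ2]
  have h4 : pgh = pg * ph + qg * qh := by
    rw [hpgh, hpg, hph, hqg, hqh, linPart_mul hJ2]
  have h5 : qgh = pg * qh + qg * ph := by
    rw [hqgh, hpg, hph, hqg, hqh, antiPart_mul hJ2]
  rw [hs, hTg, hTh, hTgh, hThat, h5]
  clear hpg hqg hph hqh hpgh hqgh hpg' hqg' h5 hTg hTh hTgh hThat hs
  obtain ⟨p, rfl⟩ := hpgu
  obtain ⟨a, rfl⟩ := hphu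
  obtain ⟨c, rfl⟩ := hpghu
  obtain ⟨s, rfl⟩ := hsu
  simpa only [Ring.inverse_unit] using ring_formula p s a qg qg' qh c h1 h2 h3 h4
end

section
/- Let S, T : V → V be ℝ-linear maps with S∘J = −J∘S, T∘J = −J∘T, Sᵗ = S, Tᵗ = T, and with 1 − S² and 1 − T² positive definite. Then d(v, (1 − T∘S)v) > 0 for every v ≠ 0, and the ℝ-linear operator 1 − T∘S is invertible. -/
/-!
Since `T` is symmetric, `⟪v, T S v⟫ = ⟪T v, S v⟫ ≤ (‖T v‖² + ‖S v‖²) / 2`, and positivity of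
`1 - S²` and `1 - T²` says `‖S v‖² < ‖v‖²` and `‖T v‖² < ‖v‖²` for `v ≠ 0`. Hence
`⟪v, (1 - T S) v⟫ > 0`, so `1 - T S` is injective, and therefore invertible in finite dimension.
-/

open scoped RealInnerProductSpace

/-- Let `S, T : V → V` be ℝ-linear maps with `S∘J = −J∘S`,
`T∘J = −J∘T`, `Sᵗ = S`, `Tᵗ = T`, and with `1 − S²` and `1 − T²` positive definite.
Then `d(v, (1 − T∘S)v) > 0` for every `v ≠ 0`, and the ℝ-linear operator `1 − T∘S`
is invertible. -/
theorem stmt_8 {V : Type*} [NormedAddCommGroup V] [InnerProductSpace ℝ V]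
    [FiniteDimensional ℝ V] (m : ℕ) (hdim : Module.finrank ℝ V = 2 * m)
    (J : Module.End ℝ V) (hJ2 : J * J = -1)
    (hJd : ∀ u v : V, ⟪J u, J v⟫ = ⟪u, v⟫)
    (S T : Module.End ℝ V)
    (hSJ : S * J = -(J * S)) (hTJ : T * J = -(J * T))
    (hSsym : LinearMap.adjoint S = S) (hTsym : LinearMap.adjoint T = T)
    (hSpos : ∀ v : V, v ≠ 0 → 0 < ⟪v, (1 - S * S) v⟫)
    (hTpos : ∀ v : V, v ≠ 0 → 0 < ⟪v, (1 - T * T) v⟫) :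
    (∀ v : V, v ≠ 0 → 0 < ⟪v, (1 - T * S) v⟫) ∧
    IsUnit (1 - T * S) := by
  have key : ∀ v : V, v ≠ 0 → 0 < ⟪v, (1 - T * S) v⟫ := by
    intro v hv
    have hS := hSpos v hv
    have hT := hTpos v hv
    have hSv : ⟪v, S (S v)⟫ = ⟪S v, S v⟫ := by
      rw [← LinearMap.adjoint_inner_left, hSsym]
    have hTv : ⟪v, T (T v)⟫ = ⟪T v, T v⟫ := by
      rw [← LinearMap.adjoint_inner_left, hTsym]
    have hTSv : ⟪v, T (S v)⟫ = ⟪T v, S v⟫ := by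
      rw [← LinearMap.adjoint_inner_left, hTsym]
    simp only [LinearMap.sub_apply, Module.End.one_apply, Module.End.mul_apply,
      inner_sub_right] at hS hT ⊢
    -- `‖T v - S v‖² ≥ 0` gives `2 ⟪T v, S v⟫ ≤ ‖T v‖² + ‖S v‖² < 2 ‖v‖²`.
    have hsq : 0 ≤ ⟪T v - S v, T v - S v⟫ := real_inner_self_nonneg
    rw [real_inner_sub_sub_self] at hsq
    linarith
  refine ⟨key, ?_⟩
  rw [LinearMap.isUnit_iff_ker_eq_bot, LinearMap.ker_eq_bot']
  intro v hv
  by_contra hne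
  have h := key v hne
  rw [hv, inner_zero_right] at h
  exact lt_irrefl _ h
end

section
/- Let g ∈ O(V) with p_g invertible, and let S, T : V → V be ℝ-linear with S∘J = −J∘S, T∘J = −J∘T, Sᵗ = −S, Tᵗ = −T. Assume the operators 1 − T̂_g∘S, 1 − T̂_g∘T and 1 − T∘T̂_g are invertible, and set g·S := T_g + (p_gᵗ)⁻¹ ∘ S ∘ (1 − T̂_g∘S)⁻¹ ∘ p_g⁻¹ and g·T := T_g + (p_gᵗ)⁻¹ ∘ T ∘ (1 − T̂_g∘T)⁻¹ ∘ p_g⁻¹. Then p_gᵗ ∘ (1 − (g·T)∘(g·S)) ∘ p_g = (1 − T∘T̂_g)⁻¹ ∘ (1 − T∘S) ∘ (1 − T̂_g∘S)⁻¹. -/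
/-!
Write `p, q` for `p_g, q_g` and `P, Q` for their transposes. Since `Jᵗ = -J` and `g⁻¹ = gᵗ`, the
linear and antilinear parts of `g⁻¹` are `P` and `Q`. Separating the linear and antilinear parts of
`gᵗ g = 1 = g gᵗ` gives `P p + Q q = 1`, `P q + Q p = 0` and `p Q + q P = 0`
(`parts_relations`). With `H = T̂_g = Q P⁻¹` and `A = P p` these become `q = -p H`, `A H = H A`
and `A - H A H = 1`, so that `A⁻¹ = 1 - H²`.

With `u = 1 - H S`, `v = 1 - T H`, and `T (1 - H T)⁻¹ = v⁻¹ T`, the left-hand side is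
`A - (v⁻¹ T - A H) A⁻¹ (S u⁻¹ - A H)`. Multiplying by `v` on the left and `u` on the right and
expanding gives `1 - T S` (`core_identity`).
-/

/-- The parts of `b * a = 1` that commute and anticommute with `J`, expressed through the
corresponding parts of `a` and `b`. Both follow from `(J b J)(J a J) = 1`. -/
lemma parts_relations {R : Type*} [Ring R] [Algebra ℝ R] {J a b : R} (hJ : J * J = -1)
    (hba : b * a = 1) :
    ((2⁻¹ : ℝ) • (b - J * b * J)) * ((2⁻¹ : ℝ) • (a - J * a * J)) +
      ((2⁻¹ : ℝ) • (b + J * b * J)) * ((2⁻¹ : ℝ) • (a + J * a * J)) = 1 ∧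
    ((2⁻¹ : ℝ) • (b - J * b * J)) * ((2⁻¹ : ℝ) • (a + J * a * J)) +
      ((2⁻¹ : ℝ) • (b + J * b * J)) * ((2⁻¹ : ℝ) • (a - J * a * J)) = 0 := by
  have h : (J * b * J) * (J * a * J) = 1 := by
    calc (J * b * J) * (J * a * J) = J * b * (J * J) * a * J := by noncomm_ring
      _ = -(J * (b * a) * J) := by rw [hJ]; noncomm_ring
      _ = 1 := by rw [hba, mul_one, hJ, neg_neg]
  generalize J * b * J = b' at *
  generalize J * a * J = a' at *
  simp only [smul_mul_smul_comm, ← smul_add]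
  constructor
  · have : (b - b') * (a - a') + (b + b') * (a + a') = (4 : ℝ) • (1 : R) := by
      have e : (b - b') * (a - a') + (b + b') * (a + a') = 2 * (b * a) + 2 * (b' * a') := by
        noncomm_ring
      rw [e, hba, h, Algebra.smul_def, map_ofNat]; norm_num
    rw [this, smul_smul]; norm_num
  · have : (b - b') * (a + a') + (b + b') * (a - a') = 0 := by
      have e : (b - b') * (a + a') + (b + b') * (a - a') = 2 * (b * a) - 2 * (b' * a') := by
        noncomm_ring
      rw [e, hba, h, sub_self]
    rw [this, smul_zero]

/-- The expansion behind the theorem, cleared of the inverses of `1 - T H` and `1 - H S`; here `B`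
plays the role of `A⁻¹`. -/
lemma core_identity {R : Type*} [Ring R] {A B H S T : R} (hAB : A * B = 1) (hBA : B * A = 1)
    (hc : A * H = H * A) (h1 : A - H * A * H = 1) :
    (1 - T * H) * A * (1 - H * S) -
      (T - (1 - T * H) * (A * H)) * B * (S - A * H * (1 - H * S)) = 1 - T * S := by
  have hB : B = 1 - H * H := by
    have : A * (1 - H * H) = 1 := by
      calc A * (1 - H * H) = A - A * H * H := by noncomm_ring
        _ = 1 := by rw [hc, h1]
    calc B = B * (A * (1 - H * H)) := by rw [this, mul_one]
      _ = 1 - H * H := by rw [← mul_assoc, hBA, one_mul]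
  have e1 : A * H * B = H := by rw [hc, mul_assoc, hAB, mul_one]
  have e2 : B * (A * H) = H := by rw [← mul_assoc, hBA, one_mul]
  have e3 : A * H * B * (A * H) = H * A * H := by rw [e1, mul_assoc]
  calc _ = (1 - T * H) * (A - A * H * B * (A * H)) * (1 - H * S)
        + (1 - T * H) * (A * H * B) * S + T * (B * (A * H)) * (1 - H * S) - T * B * S := by
        noncomm_ring
    _ = 1 - T * S := by rw [e3, h1, e1, e2, hB]; noncomm_ring

open scoped RealInnerProductSpace

/-- Let `g ∈ O(V)` with `p_g` invertible, and let `S, T : V → V` be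
ℝ-linear with `S∘J = −J∘S`, `T∘J = −J∘T`, `Sᵗ = −S`, `Tᵗ = −T`. Assume the operators
`1 − T̂_g∘S`, `1 − T̂_g∘T` and `1 − T∘T̂_g` are invertible, and set
`g·S := T_g + (p_gᵗ)⁻¹ ∘ S ∘ (1 − T̂_g∘S)⁻¹ ∘ p_g⁻¹` and
`g·T := T_g + (p_gᵗ)⁻¹ ∘ T ∘ (1 − T̂_g∘T)⁻¹ ∘ p_g⁻¹`. Then
`p_gᵗ ∘ (1 − (g·T)∘(g·S)) ∘ p_g = (1 − T∘T̂_g)⁻¹ ∘ (1 − T∘S) ∘ (1 − T̂_g∘S)⁻¹`. -/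
theorem stmt_11 {V : Type*} [NormedAddCommGroup V] [InnerProductSpace ℝ V]
    [FiniteDimensional ℝ V] (m : ℕ) (hdim : Module.finrank ℝ V = 2 * m)
    (J : Module.End ℝ V) (hJ2 : J * J = -1)
    (hJd : ∀ u v : V, ⟪J u, J v⟫ = ⟪u, v⟫)
    (g : Module.End ℝ V) (hgo : LinearMap.adjoint g * g = 1)
    (pg qg pg' qg' Tg Tghat : Module.End ℝ V)
    (hpg : pg = (2⁻¹ : ℝ) • (g - J * g * J))
    (hqg : qg = (2⁻¹ : ℝ) • (g + J * g * J))
    (hpgu : IsUnit pg)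
    (hpg' : pg' = (2⁻¹ : ℝ) • (Ring.inverse g - J * Ring.inverse g * J))
    (hqg' : qg' = (2⁻¹ : ℝ) • (Ring.inverse g + J * Ring.inverse g * J))
    (hTg : Tg = qg * Ring.inverse pg)
    (hThat : Tghat = qg' * Ring.inverse pg')
    (S T : Module.End ℝ V)
    (hSJ : S * J = -(J * S)) (hTJ : T * J = -(J * T))
    (hSsk : LinearMap.adjoint S = -S) (hTsk : LinearMap.adjoint T = -T)
    (hu1 : IsUnit (1 - Tghat * S)) (hu2 : IsUnit (1 - Tghat * T))
    (hu3 : IsUnit (1 - T * Tghat))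
    (gS gT : Module.End ℝ V)
    (hgS : gS = Tg + Ring.inverse (LinearMap.adjoint pg) * S *
      Ring.inverse (1 - Tghat * S) * Ring.inverse pg)
    (hgT : gT = Tg + Ring.inverse (LinearMap.adjoint pg) * T *
      Ring.inverse (1 - Tghat * T) * Ring.inverse pg) :
    LinearMap.adjoint pg * (1 - gT * gS) * pg =
      Ring.inverse (1 - T * Tghat) * (1 - T * S) * Ring.inverse (1 - Tghat * S) := by
  have hJt : LinearMap.adjoint J = -J := by
    have h : LinearMap.adjoint J * J = 1 := by
      refine LinearMap.ext fun v => ext_inner_right ℝ fun w => ?_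
      rw [Module.End.mul_apply, LinearMap.adjoint_inner_left, hJd, Module.End.one_apply]
    calc LinearMap.adjoint J = -(LinearMap.adjoint J * (J * J)) := by rw [hJ2]; simp
      _ = -J := by rw [← mul_assoc, h, one_mul]
  have hgo' : g * LinearMap.adjoint g = 1 := mul_eq_one_comm.mp hgo
  have hginv : Ring.inverse g = LinearMap.adjoint g :=
    Ring.inverse_unit (⟨g, LinearMap.adjoint g, hgo', hgo⟩ : (Module.End ℝ V)ˣ)
  have hmul : ∀ a b : Module.End ℝ V,
      LinearMap.adjoint (a * b) = LinearMap.adjoint b * LinearMap.adjoint a :=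
    fun a b => LinearMap.adjoint_comp a b
  have hP : LinearMap.adjoint pg = pg' := by
    rw [hpg', hginv, hpg]
    simp [hmul, hJt, mul_assoc]
  rw [hginv] at hpg' hqg'
  obtain ⟨r1, r2⟩ := parts_relations hJ2 hgo
  obtain ⟨-, r3⟩ := parts_relations hJ2 hgo'
  rw [← hpg, ← hqg, ← hpg', ← hqg'] at r1 r2 r3
  have hPu : IsUnit pg' := by
    rw [← hP]
    obtain ⟨w, rfl⟩ := hpgu
    refine ⟨⟨LinearMap.adjoint (w : Module.End ℝ V), LinearMap.adjoint (↑w⁻¹ : Module.End ℝ V),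
      ?_, ?_⟩, rfl⟩
    · rw [← hmul, Units.inv_mul]; exact LinearMap.adjoint_one
    · rw [← hmul, Units.mul_inv]; exact LinearMap.adjoint_one
  rw [hP] at hgS hgT ⊢
  have a1 := Ring.mul_inverse_cancel _ hpgu
  have a2 := Ring.inverse_mul_cancel _ hpgu
  have b1 := Ring.mul_inverse_cancel _ hPu
  have b2 := Ring.inverse_mul_cancel _ hPu
  have c1 := Ring.inverse_mul_cancel _ hu1
  have d1 := Ring.mul_inverse_cancel _ hu2
  have f1 := Ring.inverse_mul_cancel _ hu3
  have f2 := Ring.mul_inverse_cancel _ hu3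
  have c2 := Ring.mul_inverse_cancel _ hu1
  generalize Ring.inverse pg = pi at *
  generalize Ring.inverse pg' = Pi at *
  generalize Ring.inverse (1 - Tghat * S) = U at *
  generalize Ring.inverse (1 - Tghat * T) = W at *
  generalize Ring.inverse (1 - T * Tghat) = X at *
  have hQ : qg' = Tghat * pg' := by rw [hThat, mul_assoc, b2, mul_one]
  have hAH : pg' * pg * Tghat = -(pg' * qg) := by
    have : pg * qg' = -(qg * pg') := eq_neg_of_add_eq_zero_left r3
    rw [hThat, mul_assoc, ← mul_assoc pg, this, neg_mul, mul_assoc qg, b1, mul_one, mul_neg]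
  have hHA : Tghat * (pg' * pg) = -(pg' * qg) := by
    rw [← mul_assoc, ← hQ]; exact eq_neg_of_add_eq_zero_right r2
  have hq : qg = -(pg * Tghat) := by
    calc qg = Pi * pg' * qg := by rw [b2, one_mul]
      _ = -(Pi * (pg' * pg * Tghat)) := by rw [hAH, mul_neg, neg_neg, mul_assoc]
      _ = -(Pi * pg' * (pg * Tghat)) := by noncomm_ring
      _ = _ := by rw [b2, one_mul]
  have h1 : pg' * pg - Tghat * (pg' * pg) * Tghat = 1 := by
    rw [← r1, hQ, hq]; noncomm_ring
  have hXT : T * W = X * T := by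
    calc T * W = X * (1 - T * Tghat) * T * W := by rw [f1, one_mul]
      _ = X * T * ((1 - Tghat * T) * W) := by noncomm_ring
      _ = X * T := by rw [d1, mul_one]
  have hcore := core_identity (A := pg' * pg) (B := pi * Pi) (H := Tghat) (S := S) (T := T)
    (by rw [mul_assoc, ← mul_assoc pg, a1, one_mul, b1])
    (by rw [mul_assoc, ← mul_assoc Pi, b2, one_mul, a2]) (hAH.trans hHA.symm) h1
  have hl : pg' * gT = X * (T - (1 - T * Tghat) * (pg' * pg * Tghat)) * pi := by
    calc pg' * gT = pg' * qg * pi + pg' * Pi * (T * W) * pi := by rw [hgT, hTg]; noncomm_ring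
      _ = -(X * (1 - T * Tghat) * (pg' * pg * Tghat)) * pi + X * T * pi := by
        rw [b1, one_mul, hXT, f1, one_mul, hAH, neg_neg]
      _ = _ := by noncomm_ring
  have hr : gS * pg = Pi * (S - pg' * pg * Tghat * (1 - Tghat * S)) * U := by
    calc gS * pg = qg * (pi * pg) + Pi * S * U * (pi * pg) := by rw [hgS, hTg]; noncomm_ring
      _ = -(Pi * pg' * (pg * Tghat) * ((1 - Tghat * S) * U)) + Pi * S * U := by
        rw [a2, b2, c2, mul_one, mul_one, mul_one, one_mul, ← hq]
      _ = _ := by noncomm_ring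
  calc pg' * (1 - gT * gS) * pg = pg' * pg - (pg' * gT) * (gS * pg) := by noncomm_ring
    _ = X * (1 - T * Tghat) * (pg' * pg) * ((1 - Tghat * S) * U) - (pg' * gT) * (gS * pg) := by
      rw [f1, c2, one_mul, mul_one]
    _ = X * ((1 - T * Tghat) * (pg' * pg) * (1 - Tghat * S) -
          (T - (1 - T * Tghat) * (pg' * pg * Tghat)) * (pi * Pi) *
            (S - pg' * pg * Tghat * (1 - Tghat * S))) * U := by
      rw [hl, hr]; noncomm_ring
    _ = X * (1 - T * S) * U := by rw [hcore]
end

section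
/- Let g, h ∈ O(V) with p_g, p_h and p_{gh} invertible, and let S : V → V be ℝ-linear with S∘J = −J∘S and Sᵗ = −S. Assume 1 − T̂_h∘S and 1 − T̂_g∘(h·S) are invertible, where h·S := T_h + (p_hᵗ)⁻¹ ∘ S ∘ (1 − T̂_h∘S)⁻¹ ∘ p_h⁻¹. Viewing V as a complex vector space via (a+bi)·v := av + bJv, the four operators below are ℂ-linear and their complex determinants satisfy det_ℂ(1 − S∘T̂_{gh}) · det_ℂ(1 − T_h∘T̂_g) = det_ℂ(1 − S∘T̂_h) · det_ℂ(1 − (h·S)∘T̂_g). -/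
/-!
For `g ∈ O(V)` one has `g⁻¹ = gᵗ` and `Jᵗ = -J`, so the ℂ-linear and antilinear parts of `g⁻¹` are
`p_gᵗ` and `q_gᵗ`.  Splitting `h⁻¹ h = 1` and `(gh)⁻¹ = h⁻¹ g⁻¹` into their ℂ-linear and
antilinear parts gives `p_hᵗ p_h + q_hᵗ q_h = 1`, `p_hᵗ T_h = -q_hᵗ`,
`p_{gh}ᵗ = p_hᵗ p_gᵗ + q_hᵗ q_gᵗ` and `q_{gh}ᵗ = q_hᵗ p_gᵗ + p_hᵗ q_gᵗ`.  From these relations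
follows the operator identity
`(1 - S T̂_{gh}) p_hᵗ (1 - T_h T̂_g) = (1 - S T̂_h) p_hᵗ (1 - (h·S) T̂_g)`
(`key_identity`: after multiplication by `p_gᵗ` on the right both sides are
`p_{gh}ᵗ - S q_{gh}ᵗ`).  All factors are ℂ-linear, so the claim follows on taking complex
determinants and cancelling `det_ℂ p_hᵗ ≠ 0`.
-/

open scoped RealInnerProductSpace Classical

/-- The determinant of an ℝ-linear endomorphism `A` of `V` as a ℂ-linear operator, for the
complex structure on `V` given by `J` (with `(a+bi)•v := a•v + b•(J v)`).  If `J` is not a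
complex structure, or `A` does not commute with `J` (i.e. is not ℂ-linear), the junk value
`0` is returned. -/
noncomputable def cdet {V : Type*} [AddCommGroup V] [Module ℝ V]
    (J A : Module.End ℝ V) : ℂ :=
  if h : J * J = -1 ∧ A * J = J * A then
    letI : SMul ℂ V := ⟨fun z v => z.re • v + z.im • J v⟩
    letI : Module ℂ V := Module.ofMinimalAxioms
      (fun z x y => by
        show z.re • (x + y) + z.im • J (x + y) =
          (z.re • x + z.im • J x) + (z.re • y + z.im • J y)
        rw [map_add]; module)
      (fun z w x => by
        show (z + w).re • x + (z + w).im • J x =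
          (z.re • x + z.im • J x) + (w.re • x + w.im • J x)
        rw [Complex.add_re, Complex.add_im]; module)
      (fun z w x => by
        show (z * w).re • x + (z * w).im • J x =
          z.re • (w.re • x + w.im • J x) + z.im • J (w.re • x + w.im • J x)
        have hJx : J (J x) = -x := by
          have h1 := congrArg (fun f : Module.End ℝ V => f x) h.1
          simpa using h1
        rw [Complex.mul_re, Complex.mul_im, map_add, map_smul, map_smul, hJx]
        module)
      (fun x => by
        show (1 : ℂ).re • x + (1 : ℂ).im • J x = x
        simp)
    LinearMap.det
      ({ toFun := A
         map_add' := A.map_add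
         map_smul' := fun z v => by
           show A (z.re • v + z.im • J v) = z.re • A v + z.im • J (A v)
           have hAJ : A (J v) = J (A v) := by
             have h2 := congrArg (fun f : Module.End ℝ V => f v) h.2
             simpa using h2
           rw [map_add, map_smul, map_smul, hAJ] } : V →ₗ[ℂ] V)
  else 0

/-- Multiplicativity of the determinant, with the ℂ-module structure found by unification: the one
used in `cdet` is local to that definition and not available to instance search. -/
theorem det_mul_of_instance {V : Type*} [AddCommGroup V] {_ : Module ℂ V} {A B C : V →ₗ[ℂ] V}
    (h : ∀ v, C v = A (B v)) : LinearMap.det C = LinearMap.det A * LinearMap.det B := by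
  rw [← map_mul]
  exact congrArg LinearMap.det (LinearMap.ext h)

theorem det_one_of_instance {V : Type*} [AddCommGroup V] {_ : Module ℂ V} :
    LinearMap.det (1 : V →ₗ[ℂ] V) = 1 :=
  map_one _

theorem cdet_mul {V : Type*} [AddCommGroup V] [Module ℝ V] {J A B : Module.End ℝ V}
    (hJ : J * J = -1) (hA : A * J = J * A) (hB : B * J = J * B) :
    cdet J (A * B) = cdet J A * cdet J B := by
  have hAB : A * B * J = J * (A * B) := by rw [mul_assoc, hB, ← mul_assoc, hA, mul_assoc]
  unfold cdet
  rw [dif_pos ⟨hJ, hAB⟩, dif_pos ⟨hJ, hA⟩, dif_pos ⟨hJ, hB⟩]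
  exact det_mul_of_instance (V := V) fun _ => rfl

theorem cdet_one {V : Type*} [AddCommGroup V] [Module ℝ V] {J : Module.End ℝ V}
    (hJ : J * J = -1) : cdet J 1 = 1 := by
  unfold cdet
  rw [dif_pos ⟨hJ, by simp⟩]
  exact det_one_of_instance (V := V)

theorem ringInverse_comm {R : Type*} [Ring R] {J A : R} (hA : IsUnit A) (h : A * J = J * A) :
    Ring.inverse A * J = J * Ring.inverse A := by
  have h1 := Ring.inverse_mul_cancel A hA
  have h2 := Ring.mul_inverse_cancel A hA
  calc Ring.inverse A * J = Ring.inverse A * (J * A) * Ring.inverse A := by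
        rw [mul_assoc, mul_assoc, h2, mul_one]
    _ = J * Ring.inverse A := by rw [← h, ← mul_assoc, h1, one_mul]

theorem cdet_ne_zero {V : Type*} [AddCommGroup V] [Module ℝ V] {J A : Module.End ℝ V}
    (hJ : J * J = -1) (hA : A * J = J * A) (hu : IsUnit A) : cdet J A ≠ 0 := by
  have h := cdet_mul hJ hA (ringInverse_comm hu hA)
  rw [Ring.mul_inverse_cancel A hu, cdet_one hJ] at h
  intro h0
  simp [h0] at h

section Parts

variable {R : Type*} [Ring R] [Algebra ℝ R] {J : R}

theorem linPart_comm (hJ : J * J = -1) (g : R) :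
    ((2⁻¹ : ℝ) • (g - J * g * J)) * J = J * ((2⁻¹ : ℝ) • (g - J * g * J)) := by
  simp only [smul_mul_assoc, mul_smul_comm, sub_mul, mul_sub, mul_assoc, hJ]
  simp only [← mul_assoc, hJ]
  simp only [mul_neg, mul_one, neg_mul, one_mul]
  congr 1
  abel

theorem antiPart_anticomm (hJ : J * J = -1) (g : R) :
    ((2⁻¹ : ℝ) • (g + J * g * J)) * J = -(J * ((2⁻¹ : ℝ) • (g + J * g * J))) := by
  simp only [smul_mul_assoc, mul_smul_comm, add_mul, mul_add, mul_assoc, hJ]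
  simp only [← mul_assoc, hJ]
  simp only [mul_neg, mul_one, neg_mul, one_mul]
  rw [← smul_neg]
  congr 1
  abel

theorem linPart_mul_s12 (hJ : J * J = -1) (a b : R) :
    (2⁻¹ : ℝ) • (a * b - J * (a * b) * J) =
      ((2⁻¹ : ℝ) • (a - J * a * J)) * ((2⁻¹ : ℝ) • (b - J * b * J)) +
      ((2⁻¹ : ℝ) • (a + J * a * J)) * ((2⁻¹ : ℝ) • (b + J * b * J)) := by
  have hJ' : ∀ x, J * (J * x) = -x := fun x => by rw [← mul_assoc, hJ]; simp
  simp only [smul_mul_assoc, mul_smul_comm, add_mul, mul_add, sub_mul, mul_sub, mul_assoc, hJ',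
    mul_neg]
  module

theorem antiPart_mul_s12 (hJ : J * J = -1) (a b : R) :
    (2⁻¹ : ℝ) • (a * b + J * (a * b) * J) =
      ((2⁻¹ : ℝ) • (a + J * a * J)) * ((2⁻¹ : ℝ) • (b - J * b * J)) +
      ((2⁻¹ : ℝ) • (a - J * a * J)) * ((2⁻¹ : ℝ) • (b + J * b * J)) := by
  have hJ' : ∀ x, J * (J * x) = -x := fun x => by rw [← mul_assoc, hJ]; simp
  simp only [smul_mul_assoc, mul_smul_comm, add_mul, mul_add, sub_mul, mul_sub, mul_assoc, hJ',
    mul_neg]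
  module

end Parts

/-- The operator identity behind the determinant formula.  Here `p', q'` are the parts of `h⁻¹`,
`a, b` those of `g⁻¹`, `c, d` those of `(gh)⁻¹`, and `i, j, u` are the inverses of `p`, `p'` and
`1 - T̂_h S`; `T, Tg, Tt, Tgt` stand for `T_h`, `T̂_g`, `T̂_h`, `T̂_{gh}`. -/
theorem key_identity {R : Type*} [Ring R] {S p q p' q' a b c d i j u T Tg Tt Tgt hS : R}
    (hpp : p' * p + q' * q = 1) (hqp : q' * p + p' * q = 0)
    (hc : c = p' * a + q' * b) (hd : d = q' * a + p' * b)
    (hpi : p * i = 1) (hj : p' * j = 1) (hu : (1 - Tt * S) * u = 1)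
    (hT : T = q * i) (hTg : Tg * a = b) (hTt : Tt * p' = q') (hTgt : Tgt * c = d)
    (hhS : hS = T + j * S * u * i) :
    (1 - S * Tgt) * (p' * (1 - T * Tg)) * a = (1 - S * Tt) * (p' * (1 - hS * Tg)) * a := by
  have h1 : p' * T = -q' := by
    rw [hT, ← mul_assoc, eq_neg_of_add_eq_zero_right hqp, neg_mul, mul_assoc, hpi, mul_one]
  have h2 : i - q' * T = p' := by
    have : (p' * p + q' * q) * i = i := by rw [hpp, one_mul]
    rw [add_mul, mul_assoc, hpi, mul_one, mul_assoc, ← hT] at this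
    rw [← this]; abel
  -- Push-through: `(1 - S T̂) S (1 - T̂ S)⁻¹ = S`.
  have h3 : (1 - S * Tt) * (S * u) = S := by
    calc _ = S * ((1 - Tt * S) * u) := by noncomm_ring
      _ = S := by rw [hu, mul_one]
  have hL : (1 - S * Tgt) * (p' * (1 - T * Tg)) * a = c - S * d := by
    calc _ = (1 - S * Tgt) * (p' * a - p' * T * (Tg * a)) := by noncomm_ring
      _ = (1 - S * Tgt) * c := by rw [h1, hTg, hc]; noncomm_ring
      _ = c - S * (Tgt * c) := by noncomm_ring
      _ = _ := by rw [hTgt]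
  have hR : (1 - S * Tt) * (p' * (1 - hS * Tg)) * a = c - S * d := by
    calc _ = (1 - S * Tt) * (p' * a - p' * T * (Tg * a))
            - (1 - S * Tt) * ((p' * j) * (S * u) * i * (Tg * a)) := by
          rw [hhS]; noncomm_ring
      _ = (1 - S * Tt) * (p' * a - p' * T * b)
            - ((1 - S * Tt) * (S * u)) * i * b := by rw [hj, hTg]; noncomm_ring
      _ = p' * a - p' * T * b - S * (Tt * p') * a + S * (Tt * p') * T * b - S * i * b := by
          rw [h3]; noncomm_ring
      _ = p' * a + q' * b - S * (q' * a + (i - q' * T) * b) := by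
          rw [hTt, h1]; noncomm_ring
      _ = _ := by rw [h2, hc, hd]
  rw [hL, hR]

theorem one_sub_mul_comm {R : Type*} [Ring R] {J A B : R} (hA : A * J = -(J * A))
    (hB : B * J = -(J * B)) : (1 - A * B) * J = J * (1 - A * B) := by
  rw [sub_mul, mul_sub, one_mul, mul_one, mul_assoc, hB, mul_neg, ← mul_assoc, hA, neg_mul,
    neg_neg, mul_assoc]

theorem mul_anticomm_left {R : Type*} [Ring R] {J A B : R} (hA : A * J = J * A)
    (hB : B * J = -(J * B)) : A * B * J = -(J * (A * B)) := by
  rw [mul_assoc, hB, mul_neg, ← mul_assoc, hA, mul_assoc]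

theorem mul_anticomm_right {R : Type*} [Ring R] {J A B : R} (hA : A * J = -(J * A))
    (hB : B * J = J * B) : A * B * J = -(J * (A * B)) := by
  rw [mul_assoc, hB, ← mul_assoc, hA, neg_mul, mul_assoc]

/-- Let `g, h ∈ O(V)` with `p_g`, `p_h` and `p_{gh}` invertible, and let
`S : V → V` be ℝ-linear with `S∘J = −J∘S` and `Sᵗ = −S`. Assume `1 − T̂_h∘S` and
`1 − T̂_g∘(h·S)` are invertible, where
`h·S := T_h + (p_hᵗ)⁻¹ ∘ S ∘ (1 − T̂_h∘S)⁻¹ ∘ p_h⁻¹`. Viewing `V` as a complex vector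
space via `(a+bi)·v := av + bJv`, the four operators below are ℂ-linear and their complex
determinants satisfy
`det_ℂ(1 − S∘T̂_{gh}) · det_ℂ(1 − T_h∘T̂_g) = det_ℂ(1 − S∘T̂_h) · det_ℂ(1 − (h·S)∘T̂_g)`. -/
theorem stmt_12 {V : Type*} [NormedAddCommGroup V] [InnerProductSpace ℝ V]
    [FiniteDimensional ℝ V] (m : ℕ) (hdim : Module.finrank ℝ V = 2 * m)
    (J : Module.End ℝ V) (hJ2 : J * J = -1)
    (hJd : ∀ u v : V, ⟪J u, J v⟫ = ⟪u, v⟫)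
    (g h : Module.End ℝ V)
    (hgo : LinearMap.adjoint g * g = 1)
    (hho : LinearMap.adjoint h * h = 1)
    (pg qg ph qh pgh qgh : Module.End ℝ V)
    (hpg : pg = (2⁻¹ : ℝ) • (g - J * g * J))
    (hqg : qg = (2⁻¹ : ℝ) • (g + J * g * J))
    (hph : ph = (2⁻¹ : ℝ) • (h - J * h * J))
    (hqh : qh = (2⁻¹ : ℝ) • (h + J * h * J))
    (hpgh : pgh = (2⁻¹ : ℝ) • (g * h - J * (g * h) * J))
    (hqgh : qgh = (2⁻¹ : ℝ) • (g * h + J * (g * h) * J))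
    (hpgu : IsUnit pg) (hphu : IsUnit ph) (hpghu : IsUnit pgh)
    (pg' qg' ph' qh' pgh' qgh' : Module.End ℝ V)
    (hpg' : pg' = (2⁻¹ : ℝ) • (Ring.inverse g - J * Ring.inverse g * J))
    (hqg' : qg' = (2⁻¹ : ℝ) • (Ring.inverse g + J * Ring.inverse g * J))
    (hph' : ph' = (2⁻¹ : ℝ) • (Ring.inverse h - J * Ring.inverse h * J))
    (hqh' : qh' = (2⁻¹ : ℝ) • (Ring.inverse h + J * Ring.inverse h * J))
    (hpgh' : pgh' = (2⁻¹ : ℝ) • (Ring.inverse (g * h) - J * Ring.inverse (g * h) * J))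
    (hqgh' : qgh' = (2⁻¹ : ℝ) • (Ring.inverse (g * h) + J * Ring.inverse (g * h) * J))
    (Th Tghat Thhat Tghhat : Module.End ℝ V)
    (hTh : Th = qh * Ring.inverse ph)
    (hTghat : Tghat = qg' * Ring.inverse pg')
    (hThhat : Thhat = qh' * Ring.inverse ph')
    (hTghhat : Tghhat = qgh' * Ring.inverse pgh')
    (S : Module.End ℝ V)
    (hSJ : S * J = -(J * S)) (hSsk : LinearMap.adjoint S = -S)
    (hS : Module.End ℝ V)
    (hhS : hS = Th + Ring.inverse (LinearMap.adjoint ph) * S *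
      Ring.inverse (1 - Thhat * S) * Ring.inverse ph)
    (hu1 : IsUnit (1 - Thhat * S)) (hu2 : IsUnit (1 - Tghat * hS)) :
    ((1 - S * Tghhat) * J = J * (1 - S * Tghhat)) ∧
    ((1 - Th * Tghat) * J = J * (1 - Th * Tghat)) ∧
    ((1 - S * Thhat) * J = J * (1 - S * Thhat)) ∧
    ((1 - hS * Tghat) * J = J * (1 - hS * Tghat)) ∧
    cdet J (1 - S * Tghhat) * cdet J (1 - Th * Tghat) =
      cdet J (1 - S * Thhat) * cdet J (1 - hS * Tghat) := by
  have hJt : LinearMap.adjoint J = -J := by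
    have h1 : LinearMap.adjoint J * J = 1 := by
      ext u
      refine ext_inner_right ℝ fun v => ?_
      rw [Module.End.mul_apply, LinearMap.adjoint_inner_left, hJd]
      rfl
    calc LinearMap.adjoint J = -(LinearMap.adjoint J * (J * J)) := by rw [hJ2]; simp
      _ = -J := by rw [← mul_assoc, h1, one_mul]
  have adj_mul : ∀ a b : Module.End ℝ V,
      LinearMap.adjoint (a * b) = LinearMap.adjoint b * LinearMap.adjoint a :=
    fun a b => LinearMap.adjoint_comp a b
  have inv_eq : ∀ k : Module.End ℝ V, LinearMap.adjoint k * k = 1 →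
      Ring.inverse k = LinearMap.adjoint k := fun k hk =>
    Ring.inverse_unit (⟨k, LinearMap.adjoint k, mul_eq_one_comm.mp hk, hk⟩ : (Module.End ℝ V)ˣ)
  have adj_part : ∀ k : Module.End ℝ V,
      LinearMap.adjoint ((2⁻¹ : ℝ) • (k - J * k * J)) =
        (2⁻¹ : ℝ) • (LinearMap.adjoint k - J * LinearMap.adjoint k * J) := fun k => by
    rw [map_smulₛₗ, map_sub, adj_mul, adj_mul, hJt]
    simp [mul_assoc]
  have adj_unit : ∀ k : Module.End ℝ V, IsUnit k → IsUnit (LinearMap.adjoint k) := fun k hk => by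
    rw [← LinearMap.star_eq_adjoint]
    exact hk.star
  have hgho : LinearMap.adjoint (g * h) * (g * h) = 1 := by
    rw [adj_mul, mul_assoc, ← mul_assoc _ g h, hgo, one_mul, hho]
  rw [inv_eq g hgo] at hpg' hqg'
  rw [inv_eq h hho] at hph' hqh'
  rw [inv_eq _ hgho] at hpgh' hqgh'
  have epg : pg' = LinearMap.adjoint pg := by rw [hpg', hpg, adj_part]
  have eph : ph' = LinearMap.adjoint ph := by rw [hph', hph, adj_part]
  have epgh : pgh' = LinearMap.adjoint pgh := by rw [hpgh', hpgh, adj_part]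
  have upg' : IsUnit pg' := epg ▸ adj_unit _ hpgu
  have uph' : IsUnit ph' := eph ▸ adj_unit _ hphu
  have upgh' : IsUnit pgh' := epgh ▸ adj_unit _ hpghu
  have cph : ph * J = J * ph := hph ▸ linPart_comm hJ2 _
  have cpg' : pg' * J = J * pg' := hpg' ▸ linPart_comm hJ2 _
  have cph' : ph' * J = J * ph' := hph' ▸ linPart_comm hJ2 _
  have cpgh' : pgh' * J = J * pgh' := hpgh' ▸ linPart_comm hJ2 _
  have aqh : qh * J = -(J * qh) := hqh ▸ antiPart_anticomm hJ2 _
  have aqg' : qg' * J = -(J * qg') := hqg' ▸ antiPart_anticomm hJ2 _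
  have aqh' : qh' * J = -(J * qh') := hqh' ▸ antiPart_anticomm hJ2 _
  have aqgh' : qgh' * J = -(J * qgh') := hqgh' ▸ antiPart_anticomm hJ2 _
  have aTh : Th * J = -(J * Th) := hTh ▸ mul_anticomm_right aqh (ringInverse_comm hphu cph)
  have aTg : Tghat * J = -(J * Tghat) :=
    hTghat ▸ mul_anticomm_right aqg' (ringInverse_comm upg' cpg')
  have aTt : Thhat * J = -(J * Thhat) :=
    hThhat ▸ mul_anticomm_right aqh' (ringInverse_comm uph' cph')
  have aTgt : Tghhat * J = -(J * Tghhat) :=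
    hTghhat ▸ mul_anticomm_right aqgh' (ringInverse_comm upgh' cpgh')
  rw [← eph] at hhS
  have ahS : hS * J = -(J * hS) := by
    have := mul_anticomm_right (mul_anticomm_right (mul_anticomm_left
      (ringInverse_comm uph' cph') hSJ) (ringInverse_comm hu1 (one_sub_mul_comm aTt hSJ)))
      (ringInverse_comm hphu cph)
    rw [hhS, add_mul, mul_add, aTh, this, neg_add]
  have c1 := one_sub_mul_comm hSJ aTgt
  have c2 := one_sub_mul_comm aTh aTg
  have c3 := one_sub_mul_comm hSJ aTt
  have c4 := one_sub_mul_comm ahS aTg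
  refine ⟨c1, c2, c3, c4, ?_⟩
  have hpp : ph' * ph + qh' * qh = 1 := by
    rw [hph', hph, hqh', hqh, ← linPart_mul_s12 hJ2, hho, mul_one, hJ2]
    module
  have hqp : qh' * ph + ph' * qh = 0 := by
    rw [hph', hph, hqh', hqh, ← antiPart_mul_s12 hJ2, hho, mul_one, hJ2]
    simp
  have hc : pgh' = ph' * pg' + qh' * qg' := by
    rw [hpgh', adj_mul, linPart_mul_s12 hJ2, hph', hpg', hqh', hqg']
  have hd : qgh' = qh' * pg' + ph' * qg' := by
    rw [hqgh', adj_mul, antiPart_mul_s12 hJ2, hph', hpg', hqh', hqg']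
  have cancel : ∀ a b : Module.End ℝ V, IsUnit b → a * Ring.inverse b * b = a := fun a b hb => by
    rw [mul_assoc, Ring.inverse_mul_cancel b hb, mul_one]
  have key := upg'.mul_right_cancel (key_identity hpp hqp hc hd
    (Ring.mul_inverse_cancel _ hphu) (Ring.mul_inverse_cancel _ uph')
    (Ring.mul_inverse_cancel _ hu1) hTh (hTghat ▸ cancel _ _ upg') (hThhat ▸ cancel _ _ uph')
    (hTghhat ▸ cancel _ _ upgh') hhS)
  have comm_mul : ∀ a b : Module.End ℝ V, a * J = J * a → b * J = J * b →
      a * b * J = J * (a * b) := fun a b ha hb => by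
    rw [mul_assoc, hb, ← mul_assoc, ha, mul_assoc]
  have hdet := congrArg (cdet J) key
  rw [cdet_mul hJ2 c1 (comm_mul _ _ cph' c2), cdet_mul hJ2 cph' c2,
    cdet_mul hJ2 c3 (comm_mul _ _ cph' c4), cdet_mul hJ2 cph' c4] at hdet
  apply mul_left_cancel₀ (cdet_ne_zero hJ2 cph' uph')
  linear_combination hdet
end

section
/- Let B be a symmetric m×m complex matrix (Bᵀ = B) whose real part Re B is positive definite, and let c ∈ ℂᵐ. Then B is invertible, the integral I := ∫_{ℝᵐ} exp(−½ xᵀBx + cᵀx) dx (with dx equal to (2π)^{−m/2} times Lebesgue measure) converges, and I² · det B = exp(cᵀB⁻¹c). In particular, when B is real and c = 0, I = (det B)^{−1/2} with the positive square root. -/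
/-!
Write `B = A + iC` with `A`, `C` real symmetric and `A` positive definite. There is a real
invertible `P` with `Pᵀ A P = 1` and `Pᵀ C P = diag d`
(`exists_simultaneous_diagonalization`), so `Pᵀ B P = diag (1 + i dⱼ)`. The substitution `x = P y`
turns the integral into `|det P|` times a product of one-dimensional complex Gaussian integrals,
each of which is in Mathlib up to the choice of a square root. Squaring removes that choice, and
`(det P)² det B = ∏ (1 + i dⱼ)`, `B⁻¹ = P diag (1 + i dⱼ)⁻¹ Pᵀ` give the formula for `I² det B`
(`gaussian_of_diag`).

When `B` is real and `c = 0`, `I` is a nonnegative real with `I² det B = 1`, which identifies it as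
the positive square root of `(det B)⁻¹`.
-/

open MeasureTheory Matrix

open scoped MatrixOrder in
/-- The congruence is `P = Q⁻¹ U`, where `A = Qᵀ Q` and `U` is an orthogonal matrix diagonalizing
the symmetric matrix `Q⁻ᵀ C Q⁻¹`. -/
lemma exists_simultaneous_diagonalization {n : Type*} [Fintype n] [DecidableEq n]
    {A C : Matrix n n ℝ} (hA : A.PosDef) (hC : C.transpose = C) :
    ∃ (P : Matrix n n ℝ) (d : n → ℝ), IsUnit P.det ∧ Pᵀ * A * P = 1 ∧
      Pᵀ * C * P = diagonal d := by
  obtain ⟨Q, hQ, rfl⟩ :=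
    CStarAlgebra.isStrictlyPositive_iff_eq_star_mul_self.mp hA.isStrictlyPositive
  have hQd : IsUnit Q.det := (Matrix.isUnit_iff_isUnit_det _).mp hQ
  have hQ1 : Q * Q⁻¹ = 1 := Matrix.mul_nonsing_inv _ hQd
  have hQ2 : (Q⁻¹)ᵀ * Qᵀ = 1 := by rw [← transpose_mul, hQ1, transpose_one]
  have hH : ((Q⁻¹)ᵀ * C * Q⁻¹).IsHermitian := by
    rw [Matrix.IsHermitian, conjTranspose_eq_transpose_of_trivial]
    simp [Matrix.mul_assoc, hC]
  have hU : star (hH.eigenvectorUnitary : Matrix n n ℝ) * hH.eigenvectorUnitary = 1 :=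
    Unitary.coe_star_mul_self _
  have hs := hH.conjStarAlgAut_star_eigenvectorUnitary
  rw [Unitary.conjStarAlgAut_star_apply] at hs
  generalize (hH.eigenvectorUnitary : Matrix n n ℝ) = U at hU hs
  rw [star_eq_conjTranspose, conjTranspose_eq_transpose_of_trivial] at hU hs
  refine ⟨Q⁻¹ * U, hH.eigenvalues, ?_, ?_, ?_⟩
  · rw [det_mul]
    refine IsUnit.mul ((Matrix.isUnit_nonsing_inv_det_iff).mpr hQd) ?_
    exact Matrix.isUnit_det_of_left_inverse hU
  · rw [star_eq_conjTranspose, conjTranspose_eq_transpose_of_trivial, transpose_mul]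
    calc Uᵀ * (Q⁻¹)ᵀ * (Qᵀ * Q) * (Q⁻¹ * U) = Uᵀ * ((Q⁻¹)ᵀ * Qᵀ) * (Q * Q⁻¹) * U := by
          simp only [Matrix.mul_assoc]
      _ = 1 := by rw [hQ1, hQ2]; simp [hU]
  · rw [transpose_mul]
    simpa [Matrix.mul_assoc, Function.comp_def] using hs

lemma sum_eq_dot {m : ℕ} (B : Matrix (Fin m) (Fin m) ℂ) (x : Fin m → ℂ) :
    ∑ i, ∑ j, B i j * x i * x j = x ⬝ᵥ B *ᵥ x := by
  simp only [dotProduct, mulVec, Finset.mul_sum]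
  exact Finset.sum_congr rfl fun i _ => Finset.sum_congr rfl fun j _ => by ring

/-- The Gaussian integral for a complex matrix `B` that a real change of variables `P` diagonalizes
by congruence, the diagonal entries having positive real part. -/
lemma gaussian_of_diag {m : ℕ} (B : Matrix (Fin m) (Fin m) ℂ) (c : Fin m → ℂ)
    (P : Matrix (Fin m) (Fin m) ℝ) (hP : IsUnit P.det) (b : Fin m → ℂ) (hb : ∀ i, 0 < (b i).re)
    (h : (P.map Complex.ofReal)ᵀ * B * P.map Complex.ofReal = diagonal b) :
    IsUnit B ∧
    Integrable (fun x : Fin m → ℝ =>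
      Complex.exp (-(2⁻¹ : ℂ) * ∑ i, ∑ j, B i j * (x i : ℂ) * (x j : ℂ) +
        ∑ i, c i * (x i : ℂ))) ∧
    ((((2 * Real.pi) ^ (-(m : ℝ) / 2) : ℝ) : ℂ) *
        ∫ x : Fin m → ℝ, Complex.exp (-(2⁻¹ : ℂ) * ∑ i, ∑ j, B i j * (x i : ℂ) * (x j : ℂ) +
          ∑ i, c i * (x i : ℂ))) ^ 2 * B.det =
      Complex.exp (∑ i, ∑ j, B⁻¹ i j * c i * c j) := by
  have hb0 : ∀ i, b i ≠ 0 := fun i h0 => by simpa [h0] using hb i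
  set R := P.map Complex.ofReal with hR
  have hRdet : R.det = (P.det : ℂ) := (Complex.ofRealHom.map_det P).symm
  have hRu : IsUnit R.det := by
    rw [hRdet]; exact isUnit_iff_ne_zero.mpr (by exact_mod_cast hP.ne_zero)
  have hRTu : IsUnit Rᵀ.det := by rwa [det_transpose]
  have hdet : R.det ^ 2 * B.det = ∏ i, b i := by
    rw [← det_diagonal, ← h, det_mul, det_mul, det_transpose]; ring
  have hBd : IsUnit B.det := by
    rw [isUnit_iff_ne_zero]
    intro h0
    rw [h0, mul_zero] at hdet
    exact Finset.prod_ne_zero_iff.mpr (fun i _ => hb0 i) hdet.symm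
  have hinv : B⁻¹ = R * diagonal (fun i => (b i)⁻¹) * Rᵀ := by
    apply Matrix.inv_eq_right_inv
    have hD : diagonal b * diagonal (fun i => (b i)⁻¹) = 1 := by
      rw [diagonal_mul_diagonal, ← diagonal_one]; congr 1; ext i; exact mul_inv_cancel₀ (hb0 i)
    calc B * (R * diagonal (fun i => (b i)⁻¹) * Rᵀ)
        = (Rᵀ)⁻¹ * (Rᵀ * B * R * diagonal (fun i => (b i)⁻¹)) * Rᵀ := by
          simp only [← Matrix.mul_assoc, Matrix.nonsing_inv_mul _ hRTu, Matrix.one_mul]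
      _ = 1 := by rw [h, hD, Matrix.mul_one, Matrix.nonsing_inv_mul _ hRTu]
  set F : (Fin m → ℝ) → ℂ := fun x =>
      Complex.exp (-(2⁻¹ : ℂ) * ∑ i, ∑ j, B i j * (x i : ℂ) * (x j : ℂ) +
        ∑ i, c i * (x i : ℂ)) with hF
  set L : (Fin m → ℝ) →L[ℝ] (Fin m → ℝ) := LinearMap.toContinuousLinearMap (toLin' P) with hL
  have hLdet : L.det = P.det := by
    simp [hL]
  have hLinj : Function.Injective L := by
    intro x y hxy
    have : P *ᵥ x = P *ᵥ y := by simpa [hL] using hxy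
    have := congrArg (P⁻¹ *ᵥ ·) this
    simpa [mulVec_mulVec, Matrix.nonsing_inv_mul _ hP] using this
  have hLsurj : Function.Surjective L := LinearMap.injective_iff_surjective.mp hLinj
  have hFL : ∀ y, F (L y) = Complex.exp (-∑ i, (b i / 2) * (y i : ℂ) ^ 2 +
      ∑ i, (Rᵀ *ᵥ c) i * (y i : ℂ)) := by
    intro y
    have hLy : (fun i => ((L y i : ℝ) : ℂ)) = R *ᵥ (fun i => (y i : ℂ)) := by
      ext i; simp [hL, hR, mulVec, dotProduct]
    simp only [hF]
    congr 2
    · rw [sum_eq_dot B (fun i => ((L y i : ℝ) : ℂ)), hLy, mulVec_mulVec, ← vecMul_transpose,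
        ← dotProduct_mulVec, mulVec_mulVec, ← Matrix.mul_assoc, h]
      simp only [dotProduct, mulVec_diagonal, Finset.mul_sum, ← Finset.sum_neg_distrib]
      exact Finset.sum_congr rfl fun i _ => by ring
    · change c ⬝ᵥ (fun i => ((L y i : ℝ) : ℂ)) = (Rᵀ *ᵥ c) ⬝ᵥ (fun i => (y i : ℂ))
      rw [hLy, dotProduct_mulVec, mulVec_transpose]
  have hbre : ∀ i, 0 < (b i / 2).re := fun i => by
    have := hb i
    simp; linarith
  have hI1 := GaussianFourier.integrable_cexp_neg_sum_mul_add hbre (Rᵀ *ᵥ c)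
  have hI2 := GaussianFourier.integral_cexp_neg_sum_mul_add hbre (Rᵀ *ᵥ c)
  simp only [← hFL] at hI1 hI2
  have himg : Set.image L Set.univ = Set.univ := Set.image_univ_of_surjective hLsurj
  have hder : ∀ x ∈ Set.univ, HasFDerivWithinAt L L Set.univ x := fun x _ => L.hasFDerivWithinAt
  have hint := integrableOn_image_iff_integrableOn_abs_det_fderiv_smul volume MeasurableSet.univ
    hder hLinj.injOn F
  have hval := integral_image_eq_integral_abs_det_fderiv_smul volume MeasurableSet.univ
    hder hLinj.injOn F
  simp only [himg, integrableOn_univ, setIntegral_univ, hLdet] at hint hval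
  refine ⟨(Matrix.isUnit_iff_isUnit_det _).mpr hBd, hint.mpr (hI1.smul _), ?_⟩
  rw [hval, integral_smul, hI2]
  have hquad : ∑ i, ∑ j, B⁻¹ i j * c i * c j = ∑ i, (Rᵀ *ᵥ c) i ^ 2 / b i := by
    rw [sum_eq_dot, hinv, ← mulVec_mulVec, ← mulVec_mulVec, dotProduct_mulVec,
      ← mulVec_transpose]
    simp only [dotProduct, mulVec_diagonal]
    exact Finset.sum_congr rfl fun i _ => by ring
  -- Squaring makes the choice of branch of `z ^ (1 / 2)` irrelevant.
  have hsq : ∀ i, ((Real.pi / (b i / 2)) ^ (1 / 2 : ℂ) *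
      Complex.exp ((Rᵀ *ᵥ c) i ^ 2 / (4 * (b i / 2)))) ^ 2 =
      (2 * Real.pi) * (b i)⁻¹ * Complex.exp ((Rᵀ *ᵥ c) i ^ 2 / b i) := by
    intro i
    have h2 : ((Real.pi / (b i / 2) : ℂ) ^ (1 / 2 : ℂ)) ^ 2 = Real.pi / (b i / 2) := by
      rw [← Complex.cpow_nat_mul]; simp
    rw [mul_pow, h2, ← Complex.exp_nat_mul]
    congr 1
    · field_simp
    · congr 1
      have := hb0 i
      push_cast
      field_simp
      ring
  have hK : ((((2 * Real.pi) ^ (-(m : ℝ) / 2) : ℝ) : ℂ)) ^ 2 * (2 * Real.pi) ^ m = 1 := by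
    have h0 : (0 : ℝ) < 2 * Real.pi := by positivity
    have : ((2 * Real.pi) ^ (-(m : ℝ) / 2)) ^ 2 * (2 * Real.pi) ^ m = 1 := by
      rw [← Real.rpow_natCast, ← Real.rpow_natCast, ← Real.rpow_mul h0.le, ← Real.rpow_add h0]
      simp
    exact_mod_cast this
  have hP2 : ((|P.det| : ℝ) : ℂ) ^ 2 = R.det ^ 2 := by
    rw [hRdet]; norm_cast; exact sq_abs _
  have hb1 : (∏ i, b i) ≠ 0 := Finset.prod_ne_zero_iff.mpr (fun i _ => hb0 i)
  rw [hquad, Complex.exp_sum, Complex.real_smul, mul_pow, mul_pow, hP2, ← Finset.prod_pow]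
  simp only [hsq, Finset.prod_mul_distrib, Finset.prod_const, Finset.prod_inv_distrib]
  rw [Finset.card_univ, Fintype.card_fin]
  set E := ∏ i, Complex.exp ((Rᵀ *ᵥ c) i ^ 2 / b i)
  set K := (((2 * Real.pi) ^ (-(m : ℝ) / 2) : ℝ) : ℂ)
  have hprod : (∏ i, b i) * (∏ i, b i)⁻¹ = 1 := mul_inv_cancel₀ hb1
  calc _ = (K ^ 2 * (2 * Real.pi) ^ m) * ((R.det ^ 2 * B.det) * (∏ i, b i)⁻¹) * E := by ring
    _ = E := by rw [hK, hdet, hprod]; ring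

/-- Let `B` be a symmetric `m×m` complex matrix (`Bᵀ = B`) whose real
part `Re B` is positive definite, and let `c ∈ ℂᵐ`.  Then `B` is invertible, the integral
`I := ∫_{ℝᵐ} exp(−½ xᵀBx + cᵀx) dx` (with `dx` equal to `(2π)^{−m/2}` times Lebesgue
measure) converges, and `I² · det B = exp(cᵀB⁻¹c)`.  In particular, when `B` is real and
`c = 0`, `I = (det B)^{−1/2}` with the positive square root. -/
theorem stmt_13 (m : ℕ) (B : Matrix (Fin m) (Fin m) ℂ) (hBsymm : B.transpose = B)
    (hRe : ∀ x : Fin m → ℝ, x ≠ 0 → 0 < ∑ i, ∑ j, (B i j).re * x i * x j)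
    (c : Fin m → ℂ) :
    IsUnit B ∧
    Integrable (fun x : Fin m → ℝ =>
      Complex.exp (-(2⁻¹ : ℂ) * ∑ i, ∑ j, B i j * (x i : ℂ) * (x j : ℂ) +
        ∑ i, c i * (x i : ℂ))) ∧
    ((((2 * Real.pi) ^ (-(m : ℝ) / 2) : ℝ) : ℂ) *
        ∫ x : Fin m → ℝ, Complex.exp (-(2⁻¹ : ℂ) * ∑ i, ∑ j, B i j * (x i : ℂ) * (x j : ℂ) +
          ∑ i, c i * (x i : ℂ))) ^ 2 * B.det =
      Complex.exp (∑ i, ∑ j, B⁻¹ i j * c i * c j) ∧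
    ((∀ i j, (B i j).im = 0) → c = 0 →
      (((2 * Real.pi) ^ (-(m : ℝ) / 2) : ℝ) : ℂ) *
        ∫ x : Fin m → ℝ, Complex.exp (-(2⁻¹ : ℂ) * ∑ i, ∑ j, B i j * (x i : ℂ) * (x j : ℂ) +
          ∑ i, c i * (x i : ℂ)) =
        (((B.map Complex.re).det ^ (-(1 : ℝ) / 2) : ℝ) : ℂ)) := by
  have hA : (B.map Complex.re).PosDef := by
    refine .of_dotProduct_mulVec_pos ?_ fun x hx => ?_
    · rw [Matrix.IsHermitian, conjTranspose_eq_transpose_of_trivial, ← transpose_map, hBsymm]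
    · refine (hRe x hx).trans_eq ?_
      simp only [dotProduct, mulVec, Finset.mul_sum, star_trivial, map_apply]
      exact Finset.sum_congr rfl fun i _ => Finset.sum_congr rfl fun j _ => by ring
  have hC : (B.map Complex.im)ᵀ = B.map Complex.im := by rw [← transpose_map, hBsymm]
  obtain ⟨P, d, hP, h1, h2⟩ := exists_simultaneous_diagonalization hA hC
  have hdiag : (P.map Complex.ofReal)ᵀ * B * P.map Complex.ofReal =
      diagonal (fun i => 1 + (d i : ℂ) * Complex.I) := by
    ext i j
    have e1 := congrFun (congrFun h1 i) j
    have e2 := congrFun (congrFun h2 i) j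
    have e3 : ((P.map Complex.ofReal)ᵀ * B * P.map Complex.ofReal) i j =
        ((Pᵀ * B.map Complex.re * P) i j : ℂ) + ((Pᵀ * B.map Complex.im * P) i j : ℂ) *
          Complex.I := by
      apply Complex.ext <;> simp [Matrix.mul_apply]
    rw [e3, e1, e2]
    by_cases hij : i = j
    · subst hij; simp
    · simp [hij]
  obtain ⟨g1, g2, g3⟩ := gaussian_of_diag B c P hP _ (fun i => by simp) hdiag
  refine ⟨g1, g2, g3, fun him hc => ?_⟩
  subst hc
  have hBre : ∀ i j, B i j = ((B i j).re : ℂ) := fun i j => Complex.ext rfl (by simp [him])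
  have hIre : (((2 * Real.pi) ^ (-(m : ℝ) / 2) : ℝ) : ℂ) *
        ∫ x : Fin m → ℝ, Complex.exp (-(2⁻¹ : ℂ) * ∑ i, ∑ j, B i j * (x i : ℂ) * (x j : ℂ) +
          ∑ i, (0 : Fin m → ℂ) i * (x i : ℂ)) =
      (((2 * Real.pi) ^ (-(m : ℝ) / 2) * ∫ x : Fin m → ℝ,
        Real.exp (-2⁻¹ * ∑ i, ∑ j, (B i j).re * x i * x j) : ℝ) : ℂ) := by
    rw [Complex.ofReal_mul, ← integral_complex_ofReal]
    congr 2
    ext x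
    rw [Complex.ofReal_exp]
    push_cast
    simp only [← hBre]
    simp
  have hdetre : B.det = ((B.map Complex.re).det : ℂ) := by
    rw [show ((B.map Complex.re).det : ℂ) = ((B.map Complex.re).map Complex.ofReal).det from
      Complex.ofRealHom.map_det _]
    congr 1
    ext i j
    simpa using hBre i j
  rw [hIre] at g3 ⊢
  have hpos : 0 ≤ (2 * Real.pi) ^ (-(m : ℝ) / 2) * ∫ x : Fin m → ℝ,
        Real.exp (-2⁻¹ * ∑ i, ∑ j, (B i j).re * x i * x j) :=
    mul_nonneg (by positivity) (integral_nonneg fun x => (Real.exp_pos _).le)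
  generalize (2 * Real.pi) ^ (-(m : ℝ) / 2) * ∫ x : Fin m → ℝ,
        Real.exp (-2⁻¹ * ∑ i, ∑ j, (B i j).re * x i * x j) = J at g3 hpos ⊢
  rw [hdetre] at g3
  have g4 : J ^ 2 * (B.map Complex.re).det = 1 := by
    simp only [Pi.zero_apply, mul_zero, Finset.sum_const_zero, Complex.exp_zero] at g3
    exact_mod_cast g3
  have g5 : (B.map Complex.re).det = (J ^ 2)⁻¹ := eq_inv_of_mul_eq_one_right g4
  rw [g5, ← Real.rpow_natCast, ← Real.rpow_neg hpos, ← Real.rpow_mul hpos]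
  norm_num
end

section
/- Let T : V → V be ℝ-linear with T∘J = −J∘T, Tᵗ = T, and 1 − T² positive definite. Then ∫_V exp(½ d(u,Tu) − ½ d(u,u)) du = (det_ℝ(1 − T²))^{−1/4}, where du is (2π)^{−m} times the Riemannian volume measure on V and det_ℝ denotes the determinant of an ℝ-linear operator on V. (This is the squared Fock-space norm ‖f_T‖² of the Gaussian vector f_T(u) := exp(¼⟨u,Tu⟩).) -/
/-!
The operator `T` is symmetric, so it is diagonal in an orthonormal basis, with eigenvalues `μ i`.
Positivity of `1 - T²` forces `μ i ^ 2 < 1`, and Fubini reduces the integral to one-dimensional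
Gaussian integrals: it equals `(2π)^m * det (1 - T)^(-1/2)` (`integral_exp_of_eigenbasis`).
Since `J` anticommutes with `T`, it conjugates `1 - T` into `1 + T`, so these two operators have
the same determinant and `det (1 - T²) = det (1 - T)²` (`det_one_sub_mul_self`).
-/

open scoped RealInnerProductSpace
open MeasureTheory

/-- The factors `1 - T` and `1 + T` of `1 - T²` are conjugate under `J`. -/
lemma det_one_sub_mul_self {V : Type*} [AddCommGroup V] [Module ℝ V]
    (J T : Module.End ℝ V) (hJ2 : J * J = -1) (hTJ : T * J = -(J * T)) :
    LinearMap.det (1 - T * T : Module.End ℝ V) = LinearMap.det (1 - T : Module.End ℝ V) ^ 2 := by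
  have hfac : (1 - T * T : Module.End ℝ V) = (1 - T) * (1 + T) := by noncomm_ring
  have hconj : (1 + T) * J = J * (1 - T) := by
    rw [add_mul, mul_sub, hTJ]; simp [sub_eq_add_neg]
  have hJ : LinearMap.det J ≠ 0 := by
    have hinv : J * (-J) = 1 := by rw [mul_neg, hJ2, neg_neg]
    have h := congrArg LinearMap.det hinv
    rw [map_mul, map_one] at h
    exact left_ne_zero_of_mul_eq_one h
  have hdet : LinearMap.det (1 + T : Module.End ℝ V) = LinearMap.det (1 - T : Module.End ℝ V) := by
    have h := congrArg LinearMap.det hconj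
    rw [map_mul, map_mul, mul_comm] at h
    exact mul_left_cancel₀ hJ h
  rw [hfac, map_mul, hdet, sq]

lemma det_one_sub_of_eigenbasis {V ι : Type*} [AddCommGroup V] [Module ℝ V]
    [Fintype ι] [DecidableEq ι] (b : Module.Basis ι ℝ V) (T : Module.End ℝ V) (μ : ι → ℝ)
    (hμ : ∀ i, T (b i) = μ i • b i) :
    LinearMap.det (1 - T : Module.End ℝ V) = ∏ i, (1 - μ i) := by
  rw [← LinearMap.det_toMatrix b, ← Matrix.det_diagonal]
  congr 1
  ext i j
  rw [LinearMap.toMatrix_apply]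
  by_cases h : i = j
  · subst h
    simp [hμ]
  · simp [hμ, Matrix.diagonal, h]

/-- No assumption on the size of the eigenvalues is needed: if `1 ≤ μ i` for some `i`, both sides
vanish by convention. -/
lemma integral_exp_of_eigenbasis {V ι : Type*} [NormedAddCommGroup V] [InnerProductSpace ℝ V]
    [FiniteDimensional ℝ V] [MeasurableSpace V] [BorelSpace V] [Fintype ι]
    (b : OrthonormalBasis ι ℝ V) (T : Module.End ℝ V) (μ : ι → ℝ)
    (hμ : ∀ i, T (b i) = μ i • b i) :
    ∫ u : V, Real.exp (2⁻¹ * ⟪u, T u⟫ - 2⁻¹ * ⟪u, u⟫) =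
      ∏ i, √(Real.pi / ((1 - μ i) / 2)) := by
  have hmp : MeasurePreserving (b.repr.symm ∘ MeasurableEquiv.toLp 2 (ι → ℝ)) :=
    b.measurePreserving_repr_symm.comp
    (PiLp.volume_preserving_toLp ι)
  have hemb : MeasurableEmbedding
      (b.repr.symm ∘ (MeasurableEquiv.toLp 2 (ι → ℝ))) :=
    b.repr.symm.toHomeomorph.measurableEmbedding.comp
      (MeasurableEquiv.toLp 2 (ι → ℝ)).measurableEmbedding
  rw [← hmp.integral_comp hemb]
  simp_rw [← integral_gaussian]
  rw [← integral_fintype_prod_volume_eq_prod (fun i (x : ℝ) => Real.exp (-((1 - μ i) / 2) * x ^ 2))]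
  refine integral_congr_ae (Filter.Eventually.of_forall fun x => ?_)
  set u : V := b.repr.symm (WithLp.toLp 2 x) with hu
  have hsum : u = ∑ i, x i • b i := by
    rw [hu, ← b.sum_repr_symm]
  have hTu : T u = ∑ i, (x i * μ i) • b i := by
    rw [hsum, map_sum]
    simp [hμ, smul_smul]
  have h1 : ⟪u, u⟫ = ∑ i, x i * x i := by
    rw [hsum, b.orthonormal.inner_sum]; simp
  have h2 : ⟪u, T u⟫ = ∑ i, x i * (x i * μ i) := by
    rw [hTu, hsum, b.orthonormal.inner_sum]; simp
  change Real.exp (2⁻¹ * ⟪u, T u⟫ - 2⁻¹ * ⟪u, u⟫) =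
    ∏ i, Real.exp (-((1 - μ i) / 2) * x i ^ 2)
  rw [h1, h2, ← Real.exp_sum, Finset.mul_sum, Finset.mul_sum, ← Finset.sum_sub_distrib]
  congr 1
  exact Finset.sum_congr rfl fun i _ => by ring

/-- Let `T : V → V` be ℝ-linear with `T∘J = −J∘T`, `Tᵗ = T`, and
`1 − T²` positive definite.  Then `∫_V exp(½ d(u,Tu) − ½ d(u,u)) du = det_ℝ(1 − T²)^{−1/4}`,
where `du` is `(2π)^{−m}` times the Riemannian volume measure on `V` and `det_ℝ` denotes
the determinant of an ℝ-linear operator on `V`.  (This is the squared Fock-space norm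
`‖f_T‖²` of the Gaussian vector `f_T(u) := exp(¼⟨u,Tu⟩)`.) -/
theorem stmt_14 {V : Type*} [NormedAddCommGroup V] [InnerProductSpace ℝ V]
    [FiniteDimensional ℝ V] [MeasurableSpace V] [BorelSpace V]
    (m : ℕ) (hdim : Module.finrank ℝ V = 2 * m)
    (J : Module.End ℝ V) (hJ2 : J * J = -1)
    (hJd : ∀ u v : V, ⟪J u, J v⟫ = ⟪u, v⟫)
    (T : Module.End ℝ V)
    (hTJ : T * J = -(J * T)) (hTsym : LinearMap.adjoint T = T)
    (hTpos : ∀ v : V, v ≠ 0 → 0 < ⟪v, (1 - T * T) v⟫) :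
    ((2 * Real.pi) ^ m)⁻¹ *
      ∫ u : V, Real.exp (2⁻¹ * ⟪u, T u⟫ - 2⁻¹ * ⟪u, u⟫) =
      LinearMap.det ((1 - T * T : Module.End ℝ V) : V →ₗ[ℝ] V) ^ (-(1 : ℝ) / 4) := by
  have hsym : T.IsSymmetric := fun u v => by
    rw [← LinearMap.adjoint_inner_right, hTsym]
  set b := hsym.eigenvectorBasis hdim
  set μ : Fin (2 * m) → ℝ := hsym.eigenvalues hdim
  have hμ : ∀ i, T (b i) = μ i • b i := hsym.apply_eigenvectorBasis hdim
  have hpos : ∀ i, 0 < 1 - μ i := fun i => by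
    have hb : b i ≠ 0 := b.orthonormal.ne_zero i
    have h := hTpos (b i) hb
    have hval : (1 - T * T) (b i) = (1 - μ i * μ i) • b i := by
      simp [hμ, smul_smul, sub_smul]
    rw [hval, inner_smul_right, real_inner_self_eq_norm_sq, b.orthonormal.norm_eq_one] at h
    nlinarith
  have hdet := det_one_sub_of_eigenbasis b.toBasis T μ (by simpa using hμ)
  have hP : 0 < ∏ i, (1 - μ i) := Finset.prod_pos fun i _ => hpos i
  have hprod : ∏ i, √(Real.pi / ((1 - μ i) / 2)) =
      (2 * Real.pi) ^ m * (∏ i, (1 - μ i)) ^ (-(1 : ℝ) / 2) := by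
    have hfac : ∀ i, √(Real.pi / ((1 - μ i) / 2)) = √(2 * Real.pi) * (√(1 - μ i))⁻¹ := fun i => by
      rw [← div_eq_mul_inv, ← Real.sqrt_div (by positivity)]
      congr 1
      have := (hpos i).ne'
      field_simp
    simp_rw [hfac]
    rw [Finset.prod_mul_distrib, Finset.prod_const, Finset.card_univ, Fintype.card_fin, pow_mul,
      Real.sq_sqrt (by positivity), ← Real.finsetProd_rpow _ _ fun i _ => (hpos i).le]
    congr 1
    refine Finset.prod_congr rfl fun i _ => ?_
    rw [Real.sqrt_eq_rpow, ← Real.rpow_neg (hpos i).le]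
    norm_num
  rw [integral_exp_of_eigenbasis b T μ hμ, hprod, inv_mul_cancel_left₀ (by positivity),
    det_one_sub_mul_self J T hJ2 hTJ, hdet, ← Real.rpow_natCast, ← Real.rpow_mul hP.le]
  norm_num
end

section
/- Let T : V → V be ℝ-linear with T∘J = −J∘T, Tᵗ = T, and 1 − T² positive definite, and let v, w ∈ V. Then ∫_V exp(¼(⟨u,Tu⟩ + ⟨Tu,u⟩ + 2⟨u,v⟩ + 2⟨w,u⟩) − ½ d(u,u)) du = (det_ℝ(1 − T²))^{−1/4} · exp(¼(⟨T(1−T²)⁻¹v, v⟩ + 2⟨w, (1−T²)⁻¹v⟩ + ⟨w, T(1−T²)⁻¹w⟩)), where du is (2π)^{−m} times the Riemannian volume measure on V and det_ℝ denotes the determinant of an ℝ-linear operator on V. -/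
/-!
Since `⟨u,Tu⟩ + ⟨Tu,u⟩ = 2 d(u,Tu)`, the integrand is
`exp(-½ d(u,Au) + d(u,a) + i d(u,b))` with `A = 1 - T`, `a = ½(v + w)` and `b = ½(Jw - Jv)`.
The operator `A` is symmetric, and positive definite because `‖Tu‖ < ‖u‖` for `u ≠ 0`.
Diagonalizing `A` in an orthonormal basis (`integral_cexp_quadratic_form`) evaluates the integral as
`(2π)^m det(A)^{-1/2} exp(½ (a + ib)·A⁻¹(a + ib))`.

Conjugation by `J` turns `1 - T` into `1 + T`, so `det(1 - T²) = det(1 - T)²`, which accounts for the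
exponent `-1/4`. With `A⁻¹ = (1 + T)(1 - T²)⁻¹` the exponents agree by an expansion that uses
`TJ = -JT`, the symmetry of `T` and the antisymmetry of `J`.
-/

open scoped RealInnerProductSpace
open MeasureTheory

/-- The complex scalar product `⟨u,v⟩ := d(u,v) + i·d(Ju,v)` on `V` (antilinear in `u`)
associated to the complex structure `J`. -/
noncomputable def cInner {V : Type*} [NormedAddCommGroup V] [InnerProductSpace ℝ V]
    (J : Module.End ℝ V) (u v : V) : ℂ :=
  Complex.ofReal ⟪u, v⟫ + Complex.ofReal ⟪J u, v⟫ * Complex.I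

/-- The Gaussian integral for a symmetric positive definite operator `A` with complex linear term
`a + ib`. The vectors `p` and `q` stand for `A⁻¹ a` and `A⁻¹ b`. -/
lemma integral_cexp_quadratic_form {V : Type*} [NormedAddCommGroup V] [InnerProductSpace ℝ V]
    [FiniteDimensional ℝ V] [MeasurableSpace V] [BorelSpace V]
    {m : ℕ} (hdim : Module.finrank ℝ V = 2 * m)
    {A : Module.End ℝ V} (hA : LinearMap.IsSymmetric A)
    (hpos : ∀ x : V, x ≠ 0 → 0 < ⟪x, A x⟫) {a b p q : V} (hp : A p = a) (hq : A q = b) :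
    ∫ u : V, Complex.exp (-(((1 / 2 * ⟪u, A u⟫ : ℝ)) : ℂ) +
        ((⟪u, a⟫ : ℂ) + (⟪u, b⟫ : ℂ) * Complex.I)) =
      (((2 * Real.pi) ^ m * LinearMap.det A ^ (-(1 : ℝ) / 2) : ℝ) : ℂ) *
        Complex.exp (((1 / 2 * (⟪a, p⟫ - ⟪b, q⟫) : ℝ) : ℂ) + (⟪a, q⟫ : ℂ) * Complex.I) := by
  let e := hA.eigenvectorBasis hdim
  let l : Fin (2 * m) → ℝ := hA.eigenvalues hdim
  have hAe : ∀ i, A (e i) = l i • e i := fun i => hA.apply_eigenvectorBasis hdim i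
  have hl : ∀ i, 0 < l i := by
    intro i
    have h := hpos (e i) (e.orthonormal.ne_zero i)
    rw [hAe, real_inner_smul_right, real_inner_self_eq_norm_sq, e.orthonormal.1 i] at h
    simpa using h
  have hdet : LinearMap.det A = ∏ i, l i := by
    simpa using hA.det_eq_prod_eigenvalues hdim
  have hcoord : ∀ (x : V) i, ⟪e i, A x⟫ = l i * ⟪e i, x⟫ := by
    intro x i
    rw [← hA, hAe, real_inner_smul_left]
  have hexp : ∀ x y : V, ⟪x, y⟫ = ∑ i, ⟪e i, x⟫ * ⟪e i, y⟫ := by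
    intro x y
    rw [← e.sum_inner_mul_inner x y]
    exact Finset.sum_congr rfl fun i _ => by rw [real_inner_comm]
  let c : Fin (2 * m) → ℂ := fun i => (⟪e i, a⟫ : ℂ) + (⟪e i, b⟫ : ℂ) * Complex.I
  have key := GaussianFourier.integral_cexp_neg_sum_mul_add
    (b := fun i => ((l i / 2 : ℝ) : ℂ))
    (fun i => by rw [Complex.ofReal_re]; exact half_pos (hl i)) c
  have hint : ∫ u : V, Complex.exp (-(((1 / 2 * ⟪u, A u⟫ : ℝ)) : ℂ) +
        ((⟪u, a⟫ : ℂ) + (⟪u, b⟫ : ℂ) * Complex.I)) =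
      ∫ x : Fin (2 * m) → ℝ, Complex.exp (-∑ i, ((l i / 2 : ℝ) : ℂ) * (x i : ℂ) ^ 2
        + ∑ i, c i * x i) := by
    rw [← e.measurePreserving_repr_symm.integral_comp
        e.repr.symm.toHomeomorph.measurableEmbedding,
      ← (PiLp.volume_preserving_toLp (Fin (2 * m))).integral_comp
        (MeasurableEquiv.toLp 2 _).measurableEmbedding]
    refine integral_congr_ae (Filter.Eventually.of_forall fun x => ?_)
    have hx : ∀ i, ⟪e i, e.repr.symm (WithLp.toLp 2 x)⟫ = x i := by
      intro i
      rw [← e.repr_apply_apply, LinearIsometryEquiv.apply_symm_apply]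
    simp only
    congr 2
    · rw [hexp _ (A _)]
      simp only [hcoord, hx]
      push_cast
      rw [Finset.mul_sum]
      congr 1
      exact Finset.sum_congr rfl fun i _ => by ring
    · rw [hexp _ a, hexp _ b]
      simp only [hx, c]
      push_cast
      rw [Finset.sum_mul, ← Finset.sum_add_distrib]
      exact Finset.sum_congr rfl fun i _ => by ring
  rw [hint, key, Finset.prod_mul_distrib, ← Complex.exp_sum]
  congr 1
  · have h1 : ∀ i, ((Real.pi : ℂ) / ((l i / 2 : ℝ) : ℂ)) ^ (1 / 2 : ℂ) =
        (((2 * Real.pi) ^ (1 / 2 : ℝ) * l i ^ (-(1 : ℝ) / 2) : ℝ) : ℂ) := by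
      intro i
      have hli := hl i
      have h2 : (2 * Real.pi) ^ (1 / 2 : ℝ) * l i ^ (-(1 : ℝ) / 2) =
          (Real.pi / (l i / 2)) ^ (1 / 2 : ℝ) := by
        rw [neg_div, Real.rpow_neg hli.le, ← Real.inv_rpow hli.le,
          ← Real.mul_rpow (by positivity) (by positivity)]
        congr 1
        field_simp
      rw [h2, Complex.ofReal_cpow (by positivity)]
      push_cast
      rfl
    simp only [h1]
    rw [← Complex.ofReal_prod, Finset.prod_mul_distrib, hdet,
      Real.finsetProd_rpow _ _ (fun i _ => (hl i).le), Finset.prod_const, Finset.card_univ,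
      Fintype.card_fin, pow_mul, ← Real.rpow_natCast _ 2, ← Real.rpow_mul (by positivity)]
    norm_num
  · congr 1
    rw [hexp a p, hexp b q, hexp a q, ← Finset.sum_sub_distrib, Finset.mul_sum]
    push_cast
    rw [Finset.sum_mul, ← Finset.sum_add_distrib]
    refine Finset.sum_congr rfl fun i _ => ?_
    have hli : (l i : ℂ) ≠ 0 := by exact_mod_cast (hl i).ne'
    simp only [c, ← hp, ← hq, hcoord]
    push_cast
    field_simp
    ring_nf
    simp only [Complex.I_sq]
    ring

/-- Let `T : V → V` be ℝ-linear with `T∘J = −J∘T`, `Tᵗ = T`, and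
`1 − T²` positive definite, and let `v, w ∈ V`.  Then
`∫_V exp(¼(⟨u,Tu⟩ + ⟨Tu,u⟩ + 2⟨u,v⟩ + 2⟨w,u⟩) − ½ d(u,u)) du
  = det_ℝ(1 − T²)^{−1/4} · exp(¼(⟨T(1−T²)⁻¹v, v⟩ + 2⟨w, (1−T²)⁻¹v⟩ + ⟨w, T(1−T²)⁻¹w⟩))`,
where `du` is `(2π)^{−m}` times the Riemannian volume measure on `V`. -/
theorem stmt_15 {V : Type*} [NormedAddCommGroup V] [InnerProductSpace ℝ V]
    [FiniteDimensional ℝ V] [MeasurableSpace V] [BorelSpace V]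
    (m : ℕ) (hdim : Module.finrank ℝ V = 2 * m)
    (J : Module.End ℝ V) (hJ2 : J * J = -1)
    (hJd : ∀ u v : V, ⟪J u, J v⟫ = ⟪u, v⟫)
    (T : Module.End ℝ V)
    (hTJ : T * J = -(J * T)) (hTsym : LinearMap.adjoint T = T)
    (hTpos : ∀ v : V, v ≠ 0 → 0 < ⟪v, (1 - T * T) v⟫)
    (v w : V) :
    (((2 * Real.pi) ^ m : ℝ) : ℂ)⁻¹ *
      ∫ u : V, Complex.exp ((4⁻¹ : ℂ) * (cInner J u (T u) + cInner J (T u) u +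
          2 * cInner J u v + 2 * cInner J w u) -
        (2⁻¹ : ℂ) * Complex.ofReal ⟪u, u⟫) =
    Complex.ofReal (LinearMap.det ((1 - T * T : Module.End ℝ V) : V →ₗ[ℝ] V)
        ^ (-(1 : ℝ) / 4)) *
      Complex.exp ((4⁻¹ : ℂ) * (cInner J (T (Ring.inverse (1 - T * T) v)) v +
        2 * cInner J w (Ring.inverse (1 - T * T) v) +
        cInner J w (T (Ring.inverse (1 - T * T) w)))) := by
  have hT : ∀ x y : V, ⟪T x, y⟫ = ⟪x, T y⟫ := fun x y => by
    rw [← LinearMap.adjoint_inner_right, hTsym]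
  have hJJ : ∀ x : V, J (J x) = -x := fun x => by
    simpa using LinearMap.congr_fun hJ2 x
  have hTJ' : ∀ x : V, T (J x) = -J (T x) := fun x => by
    simpa using LinearMap.congr_fun hTJ x
  have hJ : ∀ x y : V, ⟪J x, y⟫ = -⟪x, J y⟫ := fun x y => by
    rw [← hJd x (J y), hJJ, inner_neg_right, neg_neg]
  have hsymm : LinearMap.IsSymmetric (1 - T : Module.End ℝ V) := fun x y => by
    simp [inner_sub_left, inner_sub_right, hT]
  have hpos : ∀ x : V, x ≠ 0 → 0 < ⟪x, (1 - T : Module.End ℝ V) x⟫ := by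
    intro x hx
    have h := hTpos x hx
    -- `‖x - Tx‖² + d(x, (1 - T²)x) = 2 d(x, (1 - T)x)`
    have h2 : 0 ≤ ⟪x - T x, x - T x⟫ := real_inner_self_nonneg
    simp only [LinearMap.sub_apply, Module.End.one_apply, Module.End.mul_apply, inner_sub_left,
      inner_sub_right, hT] at h h2 ⊢
    linarith
  have hunit : IsUnit (1 - T * T : Module.End ℝ V) := by
    rw [LinearMap.isUnit_iff_ker_eq_bot, LinearMap.ker_eq_bot']
    intro x hx
    by_contra hne
    have h := hTpos x hne
    rw [hx, inner_zero_right] at h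
    exact lt_irrefl _ h
  -- Both sides are expressed through `v' = (1 - T²)⁻¹v` and `w' = (1 - T²)⁻¹w`.
  have hinv : ∀ x : V, x = Ring.inverse (1 - T * T) x - T (T (Ring.inverse (1 - T * T) x)) := by
    intro x
    have h := LinearMap.congr_fun (Ring.mul_inverse_cancel _ hunit) x
    simpa using h.symm
  have hv := hinv v
  have hw := hinv w
  generalize Ring.inverse (1 - T * T) v = v' at hv ⊢
  generalize Ring.inverse (1 - T * T) w = w' at hw ⊢
  have hdetpos : 0 < LinearMap.det (1 - T : Module.End ℝ V) := by
    have h : LinearMap.det (1 - T : Module.End ℝ V) = ∏ i, hsymm.eigenvalues hdim i := by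
      simpa using hsymm.det_eq_prod_eigenvalues hdim
    rw [h]
    refine Finset.prod_pos fun i _ => ?_
    have h := hpos _ ((hsymm.eigenvectorBasis hdim).orthonormal.ne_zero i)
    rw [hsymm.apply_eigenvectorBasis, real_inner_smul_right, real_inner_self_eq_norm_sq,
      (hsymm.eigenvectorBasis hdim).orthonormal.1 i] at h
    simpa using h
  have hdet : LinearMap.det (1 - T * T : Module.End ℝ V) =
      LinearMap.det (1 - T : Module.End ℝ V) ^ 2 := by
    have hJdet : LinearMap.det J * LinearMap.det J ≠ 0 := by
      rw [← map_mul, hJ2]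
      intro h0
      have h1 : LinearMap.det ((-1 : Module.End ℝ V) * (-1)) = 1 := by simp
      rw [map_mul, h0, zero_mul] at h1
      exact zero_ne_one h1
    have hconj : J * (1 - T) = (1 + T) * J := by
      rw [mul_sub, add_mul, hTJ, mul_one, one_mul, sub_eq_add_neg]
    have h2 : LinearMap.det (1 - T : Module.End ℝ V) = LinearMap.det (1 + T : Module.End ℝ V) := by
      have h3 := congrArg LinearMap.det hconj
      rw [map_mul, map_mul, mul_comm] at h3
      exact mul_right_cancel₀ (left_ne_zero_of_mul hJdet) h3
    have hfac : (1 - T * T : Module.End ℝ V) = (1 - T) * (1 + T) := by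
      noncomm_ring
    rw [hfac, map_mul, ← h2, sq]
  have hp : (1 - T : Module.End ℝ V) ((1 / 2 : ℝ) • (v' + w' + T v' + T w')) =
      (1 / 2 : ℝ) • (v + w) := by
    rw [hv, hw]
    simp only [LinearMap.sub_apply, Module.End.one_apply, map_smul, map_add]
    module
  have hq : (1 - T : Module.End ℝ V) ((1 / 2 : ℝ) • (J w' - J v' + T (J w') - T (J v'))) =
      (1 / 2 : ℝ) • (J w - J v) := by
    rw [hv, hw]
    simp only [LinearMap.sub_apply, Module.End.one_apply, map_smul, map_add, map_sub, hTJ', map_neg]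
    module
  have hgauss := integral_cexp_quadratic_form hdim hsymm hpos hp hq
  have hintegrand : ∀ u : V, (4⁻¹ : ℂ) * (cInner J u (T u) + cInner J (T u) u +
          2 * cInner J u v + 2 * cInner J w u) - (2⁻¹ : ℂ) * Complex.ofReal ⟪u, u⟫ =
      -(((1 / 2 * ⟪u, (1 - T : Module.End ℝ V) u⟫ : ℝ)) : ℂ) +
        ((⟪u, (1 / 2 : ℝ) • (v + w)⟫ : ℂ) +
          (⟪u, (1 / 2 : ℝ) • (J w - J v)⟫ : ℂ) * Complex.I) := by
    intro u
    have e1 : ⟪J (T u), u⟫ = -⟪J u, T u⟫ := by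
      rw [hJ, hT, hTJ', inner_neg_right, hJ]
    have e2 : ⟪J w, u⟫ = ⟪u, J w⟫ := real_inner_comm _ _
    have e3 : ⟪w, u⟫ = ⟪u, w⟫ := real_inner_comm _ _
    have e4 : ⟪J u, v⟫ = -⟪u, J v⟫ := hJ _ _
    simp only [cInner, e1, e2, e3, e4, hT, LinearMap.sub_apply, Module.End.one_apply,
      inner_sub_right, real_inner_smul_right, inner_add_right]
    push_cast
    ring
  simp only [hintegrand]
  rw [hgauss, ← mul_assoc]
  congr 1
  · rw [hdet, ← Real.rpow_natCast _ 2, ← Real.rpow_mul hdetpos.le, Complex.ofReal_mul, ← mul_assoc,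
      inv_mul_cancel₀, one_mul]
    · norm_num
    · exact_mod_cast (by positivity : (2 * Real.pi) ^ m ≠ 0)
  · congr 1
    have hre : 1 / 2 * (⟪(1 / 2 : ℝ) • (v + w), (1 / 2 : ℝ) • (v' + w' + T v' + T w')⟫ -
        ⟪(1 / 2 : ℝ) • (J w - J v), (1 / 2 : ℝ) • (J w' - J v' + T (J w') - T (J v'))⟫) =
        1 / 4 * (⟪T v', v⟫ + 2 * ⟪w, v'⟫ + ⟪w, T w'⟫) := by
      have s0 : ⟪w', v'⟫ = ⟪v', w'⟫ := real_inner_comm _ _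
      have s1 : ⟪w', T v'⟫ = ⟪v', T w'⟫ := by rw [← hT, real_inner_comm]
      have s2 : ⟪w', T (T v')⟫ = ⟪v', T (T w')⟫ := by rw [← hT, ← hT, real_inner_comm]
      have s3 : ⟪w', T (T (T v'))⟫ = ⟪v', T (T (T w'))⟫ := by
        rw [← hT, ← hT, ← hT, real_inner_comm]
      rw [hv, hw]
      simp only [real_inner_smul_left, real_inner_smul_right, inner_add_left, inner_add_right,
        inner_sub_left, inner_sub_right, inner_neg_right, hT, hJ, hTJ', hJJ,
        map_neg, map_sub, s0, s1, s2, s3]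
      ring
    -- The imaginary part: `J`, `JT²` are antisymmetric, while `JT`, `JT³` are symmetric.
    have him : ⟪(1 / 2 : ℝ) • (v + w), (1 / 2 : ℝ) • (J w' - J v' + T (J w') - T (J v'))⟫ =
        1 / 4 * (⟪J (T v'), v⟫ + 2 * ⟪J w, v'⟫ + ⟪J w, T w'⟫) := by
      have a0 : ∀ x y : V, ⟪x, J y⟫ = -⟪y, J x⟫ := fun x y => by rw [← hJ, real_inner_comm]
      have a1 : ∀ x y : V, ⟪x, J (T y)⟫ = ⟪y, J (T x)⟫ := fun x y => by
        rw [a0, hT, hTJ', inner_neg_right, neg_neg]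
      have a2 : ∀ x y : V, ⟪x, J (T (T y))⟫ = -⟪y, J (T (T x))⟫ := fun x y => by
        rw [a1, hT, hTJ', inner_neg_right]
      have a3 : ∀ x y : V, ⟪x, J (T (T (T y)))⟫ = ⟪y, J (T (T (T x)))⟫ := fun x y => by
        rw [a2, hT, hTJ', inner_neg_right, neg_neg]
      have d0 := a0 v' v'
      have d1 := a0 w' w'
      have d2 := a2 v' v'
      have d3 := a2 w' w'
      rw [hv, hw]
      simp only [real_inner_smul_left, real_inner_smul_right, inner_add_left, inner_add_right,
        inner_sub_left, inner_sub_right, inner_neg_right, hT, hJ, hTJ',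
        map_neg, map_sub, a0 w' v', a1 w' v', a2 w' v', a3 w' v']
      linarith
    rw [hre, him]
    simp only [cInner]
    push_cast
    ring
end
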